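/- arXiv:1904.10867 — 14 statements merged into one kernel-verified Lean document; each statement's English description precedes it below -/
import Mathlib

section
/- Let 0 < p < 1 be real, let N ≥ 1, and let x_1,…,x_N and y_1,…,y_N be real numbers such that all 2N values are pairwise distinct. If the permutation π of {1,…,N} minimizes H(π) = Σ_{i=1}^N |x_i − y_{π(i)}|^p over all permutations, then π is non-crossing: there do not exist indices i₁ ≠ i₂ such that exactly one of the two points x_{i₂}, y_{π(i₂)} lies in the open interval whose endpoints are x_{i₁} and y_{π(i₁)}. -/
lemma conc_aux (p : ℝ) (hp0 : 0 < p) (hp1 : p < 1) (m L u v : ℝ) (hm : 0 ≤ m)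
    (hu : m < u) (hv : m < v) (h : u + v = m + L) : m ^ p + L ^ p < u ^ p + v ^ p := by
  have hL : 0 < L - m := by linarith
  have hc := (Real.strictConcaveOn_rpow hp0 hp1).2
  have hmm : m ∈ Set.Ici (0:ℝ) := hm
  have hLL : L ∈ Set.Ici (0:ℝ) := by simp; linarith
  have hne : m ≠ L := by intro h; linarith
  have ha : 0 < (L - u) / (L - m) := div_pos (by linarith) hL
  have hb : 0 < (u - m) / (L - m) := div_pos (by linarith) hL
  have hab : (L - u) / (L - m) + (u - m) / (L - m) = 1 := by
    rw [← add_div, div_eq_one_iff_eq hL.ne']; ring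
  have h1 := hc hmm hLL hne ha hb hab
  have h2 := hc hmm hLL hne hb ha (by linarith)
  have e1 : (L - u) / (L - m) * m + (u - m) / (L - m) * L = u := by
    field_simp; ring
  have e2 : (u - m) / (L - m) * m + (L - u) / (L - m) * L = v := by
    have : v = m + L - u := by linarith
    rw [this]; field_simp; ring
  simp only [smul_eq_mul] at h1 h2
  rw [e1] at h1
  rw [e2] at h2
  have e3 : ((L - u) / (L - m) * m ^ p + (u - m) / (L - m) * L ^ p) +
      ((u - m) / (L - m) * m ^ p + (L - u) / (L - m) * L ^ p) = m ^ p + L ^ p := by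
    linear_combination (m ^ p + L ^ p) * hab
  linarith

lemma abs_aux (a b c d : ℝ) (hac : a ≠ c) (hbd : b ≠ d) (had : a ≠ d) (hcb : c ≠ b)
    (h : Xor' (c ∈ Set.Ioo (min a b) (max a b)) (d ∈ Set.Ioo (min a b) (max a b))) :
    (|a - d| < |a - b| ∧ |c - b| < |c - d|) ∨ (|a - d| < |c - d| ∧ |c - b| < |a - b|) ∨
    (|c - b| < |a - b| ∧ |c - b| < |c - d| ∧ |a - b| + |c - d| = |c - b| + |a - d|) ∨
    (|a - d| < |a - b| ∧ |a - d| < |c - d| ∧ |a - b| + |c - d| = |a - d| + |c - b|) := by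
  simp only [Xor', Set.mem_Ioo] at h
  rcases lt_or_gt_of_ne hac with h1 | h1 <;> rcases lt_or_gt_of_ne hbd with h2 | h2 <;>
  rcases lt_or_gt_of_ne had with h3 | h3 <;> rcases lt_or_gt_of_ne hcb with h4 | h4 <;>
  grind

lemma key_aux (p : ℝ) (hp0 : 0 < p) (hp1 : p < 1) (a b c d : ℝ)
    (hac : a ≠ c) (hbd : b ≠ d) (had : a ≠ d) (hcb : c ≠ b)
    (h : Xor' (c ∈ Set.Ioo (min a b) (max a b)) (d ∈ Set.Ioo (min a b) (max a b))) :
    |a - d| ^ p + |c - b| ^ p < |a - b| ^ p + |c - d| ^ p := by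
  have mono : ∀ s t : ℝ, |s| < |t| → |s| ^ p < |t| ^ p := fun s t h =>
    Real.rpow_lt_rpow (abs_nonneg _) h hp0
  rcases abs_aux a b c d hac hbd had hcb h with ⟨h1, h2⟩ | ⟨h1, h2⟩ | ⟨h1, h2, h3⟩ | ⟨h1, h2, h3⟩
  · linarith [mono _ _ h1, mono _ _ h2]
  · linarith [mono _ _ h1, mono _ _ h2]
  · linarith [conc_aux p hp0 hp1 _ _ _ _ (abs_nonneg _) h1 h2 h3]
  · linarith [conc_aux p hp0 hp1 _ _ _ _ (abs_nonneg _) h1 h2 h3]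


theorem optimal_matching_noncrossing (p : ℝ) (hp0 : 0 < p) (hp1 : p < 1)
    (N : ℕ) (hN : 1 ≤ N) (x y : Fin N → ℝ)
    (hx : Function.Injective x) (hy : Function.Injective y)
    (hxy : ∀ i j, x i ≠ y j)
    (π : Equiv.Perm (Fin N))
    (hopt : ∀ σ : Equiv.Perm (Fin N),
      ∑ i, |x i - y (π i)| ^ p ≤ ∑ i, |x i - y (σ i)| ^ p) :
    ¬ ∃ i₁ i₂ : Fin N, i₁ ≠ i₂ ∧
      Xor' (x i₂ ∈ Set.Ioo (min (x i₁) (y (π i₁))) (max (x i₁) (y (π i₁))))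
           (y (π i₂) ∈ Set.Ioo (min (x i₁) (y (π i₁))) (max (x i₁) (y (π i₁)))) := by

  rintro ⟨i, j, hij, h⟩
  have hk := key_aux p hp0 hp1 _ _ _ _ (fun e => hij (hx e))
    (fun e => hij (π.injective (hy e))) (hxy _ _) (hxy _ _) h
  have ho := hopt (Equiv.swap i j |>.trans π)
  have hji : j ∈ Finset.univ.erase i := by simp [hij.symm]
  rw [← Finset.add_sum_erase _ _ (Finset.mem_univ i), ← Finset.add_sum_erase _ _ hji,
    ← Finset.add_sum_erase _ (fun k => |x k - y ((Equiv.swap i j |>.trans π) k)| ^ p)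
      (Finset.mem_univ i), ← Finset.add_sum_erase _ _ hji] at ho
  have he : ∑ k ∈ (Finset.univ.erase i).erase j,
        |x k - y ((Equiv.swap i j |>.trans π) k)| ^ p =
      ∑ k ∈ (Finset.univ.erase i).erase j, |x k - y (π k)| ^ p := by
    apply Finset.sum_congr rfl
    intro k hk
    simp only [Finset.mem_erase] at hk
    simp [Equiv.swap_apply_of_ne_of_ne hk.2.1 hk.1]
  rw [he] at ho
  simp only [Equiv.trans_apply, Equiv.swap_apply_left, Equiv.swap_apply_right] at ho
  linarith
end

section
/- Let 0 < p < 1 be real, let N ≥ 1, and let x_1,…,x_N and y_1,…,y_N be real numbers such that all 2N values are pairwise distinct. If the permutation π of {1,…,N} minimizes H(π) = Σ_{i=1}^N |x_i − y_{π(i)}|^p over all permutations, then π is sliced: for every index i, the number of indices j with x_j lying in the open interval with endpoints x_i and y_{π(i)} equals the number of indices j with y_j lying in that open interval. -/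
theorem aux_conc (p : ℝ) (hp0 : 0 < p) (hp1 : p < 1) (u v w : ℝ) (hu : 0 < u) (hv : 0 < v)
    (hw : 0 < w) : (u + v + w) ^ p + v ^ p < (u + v) ^ p + (v + w) ^ p := by
  have hc := Real.strictConcaveOn_rpow hp0 hp1
  have hs : 0 < u + w := by positivity
  have hA : v ∈ Set.Ici (0:ℝ) := hv.le
  have hB : u + v + w ∈ Set.Ici (0:ℝ) := by simp only [Set.mem_Ici]; positivity
  have hne : v ≠ u + v + w := by intro h; linarith
  have h1 := hc.2 hA hB hne (div_pos hw hs) (div_pos hu hs) (by field_simp; ring)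
  have h2 := hc.2 hA hB hne (div_pos hu hs) (div_pos hw hs) (by field_simp)
  simp only [smul_eq_mul] at h1 h2
  have e1 : w / (u + w) * v + u / (u + w) * (u + v + w) = u + v := by field_simp; ring
  have e2 : u / (u + w) * v + w / (u + w) * (u + v + w) = v + w := by field_simp; ring
  rw [e1] at h1
  rw [e2] at h2
  have e3 : u / (u + w) + w / (u + w) = 1 := by field_simp
  have e4 : u / (u + w) = 1 - w / (u + w) := by linarith
  rw [e4] at h1 h2
  linarith

theorem aux_nest (p : ℝ) (hp0 : 0 < p) (hp1 : p < 1) (r s t q : ℝ) (h1 : r < s) (h2 : s < t)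
    (h3 : t < q) : |r - q| ^ p + |s - t| ^ p < |r - t| ^ p + |s - q| ^ p := by
  have := aux_conc p hp0 hp1 (s - r) (t - s) (q - t) (by linarith) (by linarith) (by linarith)
  rw [abs_of_neg (by linarith : r - q < 0), abs_of_neg (by linarith : s - t < 0),
    abs_of_neg (by linarith : r - t < 0), abs_of_neg (by linarith : s - q < 0)]
  ring_nf at this ⊢
  linarith

theorem aux_disj (p : ℝ) (hp0 : 0 < p) (r s t q : ℝ) (h1 : r < s) (h2 : s < t)
    (h3 : t < q) : |r - s| ^ p + |t - q| ^ p < |r - t| ^ p + |s - q| ^ p := by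
  rw [abs_of_neg (by linarith : r - s < 0), abs_of_neg (by linarith : t - q < 0),
    abs_of_neg (by linarith : r - t < 0), abs_of_neg (by linarith : s - q < 0)]
  have a1 := Real.rpow_lt_rpow (by linarith : 0 ≤ -(r - s)) (by linarith : -(r-s) < -(r-t)) hp0
  have a2 := Real.rpow_lt_rpow (by linarith : 0 ≤ -(t - q)) (by linarith : -(t-q) < -(s-q)) hp0
  linarith

theorem aux_key (p : ℝ) (hp0 : 0 < p) (hp1 : p < 1) (a b c d : ℝ)
    (hac : a ≠ c) (hbd : b ≠ d) (had : a ≠ d) (hbc : b ≠ c)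
    (h : |a - b| ^ p + |c - d| ^ p ≤ |a - d| ^ p + |c - b| ^ p) :
    c ∈ Set.Ioo (min a b) (max a b) ↔ d ∈ Set.Ioo (min a b) (max a b) := by
  have N := aux_nest p hp0 hp1
  have D := aux_disj p hp0
  have nocross : ∀ r s t q : ℝ, r < s → s < t → t < q →
      |r - q| ^ p + |s - t| ^ p < |r - t| ^ p + |s - q| ^ p ∧
      |r - s| ^ p + |t - q| ^ p < |r - t| ^ p + |s - q| ^ p :=
    fun r s t q h1 h2 h3 => ⟨N r s t q h1 h2 h3, D r s t q h1 h2 h3⟩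
  have ca := abs_sub_comm a b
  have cb := abs_sub_comm c d
  have cc := abs_sub_comm a d
  have ce := abs_sub_comm c b
  simp only [Set.mem_Ioo, min_lt_iff, lt_max_iff]
  constructor
  all_goals
    intro hin
    by_contra hout
    rcases lt_or_gt_of_ne hac with h1 | h1 <;> rcases lt_or_gt_of_ne hbd with h2 | h2 <;>
    rcases lt_or_gt_of_ne had with h3 | h3 <;> rcases lt_or_gt_of_ne hbc with h4 | h4 <;>
    simp only [h1, h2, h3, h4, h1.not_gt, h2.not_gt, h3.not_gt, h4.not_gt, true_or, or_true,
      and_true, true_and, not_true, or_self, and_false, false_and, or_false, false_or,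
      and_self, not_false_eq_true] at hin hout
  all_goals
    first
    | (have := nocross a c b d (by assumption) (by assumption) (by assumption); grind)
    | (have := nocross d a c b (by assumption) (by assumption) (by assumption); grind)
    | (have := nocross b c a d (by assumption) (by assumption) (by assumption); grind)
    | (have := nocross d b c a (by assumption) (by assumption) (by assumption); grind)
    | (have := nocross a d b c (by assumption) (by assumption) (by assumption); grind)
    | (have := nocross c a d b (by assumption) (by assumption) (by assumption); grind)
    | (have := nocross b d a c (by assumption) (by assumption) (by assumption); grind)
    | (have := nocross c b d a (by assumption) (by assumption) (by assumption); grind)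

theorem optimal_matching_sliced (p : ℝ) (hp0 : 0 < p) (hp1 : p < 1)
    (N : ℕ) (hN : 1 ≤ N) (x y : Fin N → ℝ)
    (hx : Function.Injective x) (hy : Function.Injective y)
    (hxy : ∀ i j, x i ≠ y j)
    (π : Equiv.Perm (Fin N))
    (hopt : ∀ σ : Equiv.Perm (Fin N),
      ∑ i, |x i - y (π i)| ^ p ≤ ∑ i, |x i - y (σ i)| ^ p) :
    ∀ i : Fin N,
      (Finset.univ.filter (fun j : Fin N =>
        x j ∈ Set.Ioo (min (x i) (y (π i))) (max (x i) (y (π i))))).card =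
      (Finset.univ.filter (fun j : Fin N =>
        y j ∈ Set.Ioo (min (x i) (y (π i))) (max (x i) (y (π i))))).card := by
  intro i
  refine Finset.card_equiv π ?_
  intro j
  simp only [Finset.mem_filter, Finset.mem_univ, true_and]
  by_cases hij : i = j
  · subst hij
    simp only [Set.mem_Ioo, min_lt_iff, lt_max_iff, lt_irrefl, false_or, or_false]
    constructor <;> rintro ⟨h1, h2⟩ <;> exact absurd h1 h2.not_gt
  · refine aux_key p hp0 hp1 _ _ _ _ (hx.ne hij) (hy.ne (π.injective.ne hij)) (hxy _ _)
      (hxy _ _).symm ?_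
    have h := hopt (π * Equiv.swap i j)
    have key : ∀ f : Fin N → ℝ, ∑ k, f k = f i + f j + ∑ k ∈ (Finset.univ.erase i).erase j, f k := by
      intro f
      rw [← Finset.add_sum_erase Finset.univ f (Finset.mem_univ i),
        ← Finset.add_sum_erase (Finset.univ.erase i) f (a := j) (by simp [Ne.symm hij])]
      ring
    rw [key, key] at h
    have e : ∑ k ∈ (Finset.univ.erase i).erase j, |x k - y ((π * Equiv.swap i j) k)| ^ p
        = ∑ k ∈ (Finset.univ.erase i).erase j, |x k - y (π k)| ^ p := by
      refine Finset.sum_congr rfl fun k hk => ?_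
      simp only [Finset.mem_erase, Finset.mem_univ, and_true] at hk
      rw [Equiv.Perm.mul_apply, Equiv.swap_apply_of_ne_of_ne hk.2 hk.1]
    rw [e] at h
    simp only [Equiv.Perm.mul_apply, Equiv.swap_apply_left, Equiv.swap_apply_right] at h
    linarith
end

section
/- Let 0 ≤ p ≤ 1 and let n > 1 be real numbers. Then (n + p − 1)^p ≤ Γ(n+p)/Γ(n) ≤ n^p, where Γ is the real Gamma function. -/
theorem rfb_aux (x q : ℝ) (hx : 0 < x) (h0 : 0 ≤ q) (h1 : q ≤ 1) :
    Real.Gamma (x + q) ≤ Real.Gamma x * x ^ q := by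
  have hG := Real.Gamma_pos_of_pos hx
  have h := Real.convexOn_log_Gamma.2 (show x ∈ Set.Ioi (0 : ℝ) from hx)
    (show x + 1 ∈ Set.Ioi (0 : ℝ) from (by linarith : (0 : ℝ) < x + 1))
    (show 0 ≤ 1 - q by linarith) h0 (by ring)
  simp only [smul_eq_mul, Function.comp] at h
  rw [show (1 - q) * x + q * (x + 1) = x + q by ring, Real.Gamma_add_one hx.ne',
    Real.log_mul hx.ne' hG.ne'] at h
  have hp : 0 < x ^ q := Real.rpow_pos_of_pos hx q
  rw [← Real.log_le_log_iff (Real.Gamma_pos_of_pos (by linarith)) (mul_pos hG hp),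
    Real.log_mul hG.ne' hp.ne', Real.log_rpow hx]
  linarith

theorem rising_factorial_bounds (p n : ℝ) (hp0 : 0 ≤ p) (hp1 : p ≤ 1) (hn : 1 < n) :
    (n + p - 1) ^ p ≤ Real.Gamma (n + p) / Real.Gamma n ∧
    Real.Gamma (n + p) / Real.Gamma n ≤ n ^ p := by
  have hG : 0 < Real.Gamma n := Real.Gamma_pos_of_pos (by linarith)
  constructor
  · have hm : 0 < n + p - 1 := by linarith
    have h := rfb_aux (n + p - 1) (1 - p) hm (by linarith) (by linarith)
    rw [show n + p - 1 + (1 - p) = n by ring] at h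
    have e := Real.Gamma_add_one hm.ne'
    rw [show n + p - 1 + 1 = n + p by ring] at e
    have hp : 0 < (n + p - 1) ^ p := Real.rpow_pos_of_pos hm p
    rw [le_div_iff₀ hG, e]
    calc (n + p - 1) ^ p * Real.Gamma n
        ≤ (n + p - 1) ^ p * (Real.Gamma (n + p - 1) * (n + p - 1) ^ (1 - p)) :=
          mul_le_mul_of_nonneg_left h hp.le
      _ = ((n + p - 1) ^ p * (n + p - 1) ^ (1 - p)) * Real.Gamma (n + p - 1) := by ring
      _ = (n + p - 1) * Real.Gamma (n + p - 1) := by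
          rw [← Real.rpow_add hm, add_sub_cancel, Real.rpow_one]
  · rw [div_le_iff₀ hG, mul_comm]
    exact rfb_aux n p (by linarith) hp0 hp1
end

section
/- Let N ≥ 1 be a natural number and let 0 ≤ p ≤ 1 be real. Then the following chain of inequalities holds: (1 − 1/(2N+1))^{p(1−p)} ≤ (1 − (1−p)/(2N+1))^p ≤ Γ(2N+1+p)/(Γ(2N+1)·(2N+1)^p) ≤ 1. -/
theorem gamma_aux_upper (x p : ℝ) (hx : 0 < x) (hp0 : 0 ≤ p) (hp1 : p ≤ 1) :
    Real.Gamma (x + p) ≤ Real.Gamma x * x ^ p := by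
  rcases hp0.eq_or_lt with rfl | h0
  · simp
  rcases hp1.eq_or_lt with rfl | h1
  · rw [Real.Gamma_add_one hx.ne', Real.rpow_one, mul_comm]
  have hG := Real.Gamma_pos_of_pos hx
  have h := Real.Gamma_mul_add_mul_le_rpow_Gamma_mul_rpow_Gamma (s := x) (t := x + 1)
    (a := 1 - p) (b := p) hx (by linarith) (by linarith) h0 (by ring)
  rw [show (1 - p) * x + p * (x + 1) = x + p by ring, Real.Gamma_add_one hx.ne',
    Real.mul_rpow hx.le hG.le] at h
  calc _ ≤ _ := h
    _ = Real.Gamma x ^ (1 - p) * Real.Gamma x ^ p * x ^ p := by ring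
    _ = _ := by rw [← Real.rpow_add hG]; simp

theorem gamma_aux_lower (x p : ℝ) (hx : 1 < x) (hp0 : 0 ≤ p) (hp1 : p ≤ 1) :
    Real.Gamma x * (x + p - 1) ^ p ≤ Real.Gamma (x + p) := by
  have h := gamma_aux_upper (x + p - 1) (1 - p) (by linarith) (by linarith) (by linarith)
  have hy : 0 < x + p - 1 := by linarith
  have e := Real.Gamma_add_one hy.ne'
  rw [show x + p - 1 + 1 = x + p by ring] at e
  rw [show x + p - 1 + (1 - p) = x by ring] at h
  calc _ ≤ Real.Gamma (x + p - 1) * (x + p - 1) ^ (1 - p) * (x + p - 1) ^ p := by gcongr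
    _ = _ := by rw [mul_assoc, ← Real.rpow_add hy, e]; simp [mul_comm]

theorem ES_PPP_ratio_bounds (N : ℕ) (hN : 1 ≤ N) (p : ℝ) (hp0 : 0 ≤ p) (hp1 : p ≤ 1) :
    (1 - 1 / (2 * (N : ℝ) + 1)) ^ (p * (1 - p)) ≤ (1 - (1 - p) / (2 * (N : ℝ) + 1)) ^ p ∧
    (1 - (1 - p) / (2 * (N : ℝ) + 1)) ^ p ≤
      Real.Gamma (2 * (N : ℝ) + 1 + p) / (Real.Gamma (2 * (N : ℝ) + 1) * (2 * (N : ℝ) + 1) ^ p) ∧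
    Real.Gamma (2 * (N : ℝ) + 1 + p) / (Real.Gamma (2 * (N : ℝ) + 1) * (2 * (N : ℝ) + 1) ^ p) ≤ 1 := by
  have hN' : (1 : ℝ) ≤ N := by exact_mod_cast hN
  have hx : 1 < 2 * (N : ℝ) + 1 := by linarith
  generalize 2 * (N : ℝ) + 1 = x at hx
  have hx0 : 0 < x := by linarith
  have hG := Real.Gamma_pos_of_pos hx0
  have hxp : 0 < x ^ p := Real.rpow_pos_of_pos hx0 p
  have hle : 1 / x ≤ 1 := by rw [div_le_one hx0]; exact hx.le
  refine ⟨?_, ?_, ?_⟩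
  · have hb := rpow_one_add_le_one_add_mul_self (s := -(1 / x)) (by linarith) (p := 1 - p)
      (by linarith) (by linarith)
    rw [mul_comm p, Real.rpow_mul (by linarith)]
    apply Real.rpow_le_rpow (Real.rpow_nonneg (by linarith) _) _ hp0
    calc _ = (1 + -(1 / x)) ^ (1 - p) := by rw [sub_eq_add_neg 1 (1 / x)]
      _ ≤ _ := hb
      _ = _ := by ring
  · rw [le_div_iff₀ (by positivity)]
    have h := gamma_aux_lower x p hx hp0 hp1
    have e : 1 - (1 - p) / x = (x + p - 1) / x := by field_simp; ring
    rw [e, Real.div_rpow (by linarith) hx0.le]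
    calc _ = Real.Gamma x * (x + p - 1) ^ p := by field_simp
      _ ≤ _ := h
  · rw [div_le_one (by positivity)]
    exact gamma_aux_upper x p hx0 hp0 hp1
end

section
/- For every natural number n, Σ_{k=0}^{n} C_k · binom(2(n−k), n−k) = (1/2) · binom(2n+2, n+1), where C_k = binom(2k,k)/(k+1) is the k-th Catalan number. -/
theorem catalan_centralBinom_convolution (n : ℕ) :
    2 * ∑ k ∈ Finset.range (n + 1), catalan k * Nat.choose (2 * (n - k)) (n - k) =
      Nat.choose (2 * n + 2) (n + 1) := by
  have h1 : ∑ k ∈ Finset.range (n + 1), catalan k * Nat.choose (2 * (n - k)) (n - k) =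
      ∑ p ∈ Finset.HasAntidiagonal.antidiagonal n, catalan p.1 * ((p.2 + 1) * catalan p.2) := by
    rw [Finset.Nat.sum_antidiagonal_eq_sum_range_succ
      (fun i j => catalan i * ((j + 1) * catalan j))]
    refine Finset.sum_congr rfl fun k _ => ?_
    rw [succ_mul_catalan_eq_centralBinom, Nat.centralBinom_eq_two_mul_choose]
  have h2 : ∑ p ∈ Finset.HasAntidiagonal.antidiagonal n, catalan p.1 * ((p.2 + 1) * catalan p.2) =
      ∑ p ∈ Finset.HasAntidiagonal.antidiagonal n, catalan p.2 * ((p.1 + 1) * catalan p.1) :=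
    (Finset.Nat.sum_antidiagonal_swap
      (f := fun p : ℕ × ℕ => catalan p.1 * ((p.2 + 1) * catalan p.2))).symm
  have h3 : Nat.choose (2 * n + 2) (n + 1) = (n + 1 + 1) * catalan (n + 1) := by
    rw [succ_mul_catalan_eq_centralBinom, Nat.centralBinom_eq_two_mul_choose]
    rfl
  rw [h3, catalan_succ', h1, two_mul, Finset.mul_sum]
  nth_rewrite 2 [h2]
  rw [← Finset.sum_add_distrib]
  refine Finset.sum_congr rfl fun p hp => ?_
  rw [← Finset.HasAntidiagonal.mem_antidiagonal.mp hp]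
  ring
end

section
/- For every natural number n ≥ 1, binom(2n, n) = 2 · Σ_{m=1}^{n} C_{m−1} · binom(2(n−m), n−m), where C_k = binom(2k,k)/(k+1) is the k-th Catalan number. -/
theorem centralBinom_first_passage (n : ℕ) (hn : 1 ≤ n) :
    Nat.choose (2 * n) n =
      2 * ∑ m ∈ Finset.Icc 1 n, catalan (m - 1) * Nat.choose (2 * (n - m)) (n - m) := by
  obtain ⟨k, rfl⟩ : ∃ k, n = k + 1 := ⟨n - 1, by omega⟩
  have h1 : ∑ m ∈ Finset.Icc 1 (k + 1),
      catalan (m - 1) * Nat.choose (2 * (k + 1 - m)) (k + 1 - m) =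
      ∑ i ∈ Finset.range (k + 1), catalan i * ((k - i + 1) * catalan (k - i)) := by
    rw [Finset.range_eq_Ico]
    symm
    apply Finset.sum_bij (fun i _ => i + 1)
    · intro i hi
      simp only [Finset.mem_Ico, Finset.mem_Icc] at *
      omega
    · intro a _ b _ h
      omega
    · intro b hb
      simp only [Finset.mem_Icc] at hb
      exact ⟨b - 1, by simp only [Finset.mem_Ico]; omega, by omega⟩
    · intro i _
      rw [succ_mul_catalan_eq_centralBinom, Nat.centralBinom_eq_two_mul_choose,
        Nat.add_sub_cancel, Nat.add_sub_add_right]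
  have h2 : ∑ i ∈ Finset.range (k + 1), catalan i * ((k - i + 1) * catalan (k - i)) =
      ∑ i ∈ Finset.range (k + 1), catalan (k - i) * ((i + 1) * catalan i) := by
    rw [← Finset.sum_range_reflect]
    apply Finset.sum_congr rfl
    intro i hi
    have := Finset.mem_range.mp hi
    rw [show k + 1 - 1 - i = k - i by omega, show k - (k - i) = i by omega]
  rw [h1, two_mul (Finset.sum _ _)]
  nth_rewrite 2 [h2]
  rw [← Finset.sum_add_distrib, ← Nat.centralBinom_eq_two_mul_choose,
    ← succ_mul_catalan_eq_centralBinom, catalan_succ,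
    Fin.sum_univ_eq_sum_range (fun i => catalan i * catalan (k - i)), Finset.mul_sum]
  apply Finset.sum_congr rfl
  intro i hi
  have := Finset.mem_range.mp hi
  obtain ⟨j, rfl⟩ : ∃ j, k = i + j := ⟨k - i, by omega⟩
  rw [Nat.add_sub_cancel_left]
  ring
end

section
/- For every natural number s, (2s+1) · binom(2s, s) = binom(2s, s) + 2 · Σ_{m=1}^{s} (4^{m−1} + (2m−1) · binom(2m−2, m−1)) · C_{s−m}, where C_k = binom(2k,k)/(k+1) is the k-th Catalan number. Equivalently, the sequence V_s = 4^s + (2s+1)·binom(2s,s) satisfies the recursion V_s = binom(2s,s) + 4^s + 2 Σ_{m=1}^{s} V_{m−1} C_{s−m}. -/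
lemma conv_aux (n : ℕ) :
    2 * ∑ i ∈ Finset.range (n + 1), Nat.centralBinom i * catalan (n - i)
      = Nat.centralBinom (n + 1) := by
  have h1 : ∑ i ∈ Finset.range (n + 1), Nat.centralBinom i * catalan (n - i)
      = ∑ i ∈ Finset.range (n + 1), (i + 1) * (catalan i * catalan (n - i)) := by
    refine Finset.sum_congr rfl fun i _ => ?_
    rw [← succ_mul_catalan_eq_centralBinom]; ring
  have h2 : ∑ i ∈ Finset.range (n + 1), (i + 1) * (catalan i * catalan (n - i))
      = ∑ i ∈ Finset.range (n + 1), (n - i + 1) * (catalan i * catalan (n - i)) := by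
    rw [← Finset.sum_range_reflect]
    refine Finset.sum_congr rfl fun i hi => ?_
    have hi : i ≤ n := by simpa [Nat.lt_succ_iff] using hi
    have e1 : n + 1 - 1 - i = n - i := by omega
    have e2 : n - (n - i) = i := by omega
    rw [e1, e2]; ring
  have h3 : catalan (n + 1) = ∑ i ∈ Finset.range (n + 1), catalan i * catalan (n - i) := by
    rw [catalan_succ, Finset.sum_range]
  rw [← succ_mul_catalan_eq_centralBinom, two_mul, h1]
  nth_rewrite 2 [h2]
  rw [← Finset.sum_add_distrib, h3, Finset.mul_sum]
  refine Finset.sum_congr rfl fun i hi => ?_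
  have hi : i ≤ n := by simpa [Nat.lt_succ_iff] using hi
  rw [← add_mul]
  congr 1
  omega

lemma V_aux (n : ℕ) :
    ∑ i ∈ Finset.range (n + 1), (4 ^ i + (2 * i + 1) * Nat.centralBinom i) * catalan (n - i)
      = (n + 1) * Nat.centralBinom (n + 1) := by
  induction n with
  | zero => simp [Nat.centralBinom, Nat.choose]
  | succ n ih =>
    have hc := conv_aux (n + 1)
    rw [Finset.sum_range_succ'] at hc ⊢
    have key : ∑ i ∈ Finset.range (n + 1),
        (4 ^ (i + 1) + (2 * (i + 1) + 1) * Nat.centralBinom (i + 1)) * catalan (n + 1 - (i + 1))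
        = 4 * ∑ i ∈ Finset.range (n + 1),
          (4 ^ i + (2 * i + 1) * Nat.centralBinom i) * catalan (n - i)
        + ∑ i ∈ Finset.range (n + 1), Nat.centralBinom (i + 1) * catalan (n + 1 - (i + 1)) := by
      rw [Finset.mul_sum, ← Finset.sum_add_distrib]
      refine Finset.sum_congr rfl fun i _ => ?_
      have h := Nat.succ_mul_centralBinom_succ i
      rw [Nat.add_sub_add_right, ← mul_assoc, ← add_mul]
      congr 1
      rw [pow_succ]
      linarith
    rw [key, ih]
    have h := Nat.succ_mul_centralBinom_succ (n + 1)
    have h' := succ_mul_catalan_eq_centralBinom (n + 1)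
    simp only [Nat.centralBinom_zero, Nat.sub_zero] at hc ⊢
    have : 4 * ((n + 1) * Nat.centralBinom (n + 1)) * 2 + 2 * catalan (n + 1)
        + Nat.centralBinom (n + 2) = 2 * ((n + 2) * Nat.centralBinom (n + 2)) := by
      have h3 : Nat.centralBinom (n + 2) = 2 * (2 * n + 3) * catalan (n + 1) := by
        apply Nat.eq_of_mul_eq_mul_left (Nat.succ_pos (n + 1))
        rw [← h'] at h
        simp only [Nat.succ_eq_add_one]
        linarith
      rw [h3, ← h']; ring
    norm_num
    have e : n + 1 + 1 = n + 2 := rfl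
    rw [e] at *
    norm_num at hc
    linarith

theorem V_recursion (s : ℕ) :
    4 ^ s + (2 * s + 1) * Nat.choose (2 * s) s =
      Nat.choose (2 * s) s + 4 ^ s +
        2 * ∑ m ∈ Finset.Icc 1 s,
          (4 ^ (m - 1) + (2 * m - 1) * Nat.choose (2 * m - 2) (m - 1)) * catalan (s - m) := by
  cases s with
  | zero => simp
  | succ n =>
    have h : ∑ m ∈ Finset.Icc 1 (n + 1),
          (4 ^ (m - 1) + (2 * m - 1) * Nat.choose (2 * m - 2) (m - 1)) * catalan (n + 1 - m)
        = (n + 1) * Nat.centralBinom (n + 1) := by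
      rw [← V_aux, Finset.range_eq_Ico, Finset.sum_Ico_eq_sum_range,
        ← Finset.Ico_add_one_right_eq_Icc, Finset.sum_Ico_eq_sum_range]
      refine Finset.sum_congr (by simp) fun i _ => ?_
      have e1 : 1 + i - 1 = i := by omega
      have e2 : 2 * (1 + i) - 1 = 2 * i + 1 := by omega
      have e3 : 2 * (1 + i) - 2 = 2 * i := by omega
      have e4 : n + 1 - (1 + i) = n - i := by omega
      rw [e1, e2, e3, e4, zero_add, Nat.centralBinom_eq_two_mul_choose]
    rw [h, Nat.centralBinom_eq_two_mul_choose]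
    ring
end

section
/- Fix a natural number k. Then the limit as N → ∞ of v_{N,k} / (N · B_N) equals C_k / (2 · 4^k), where v_{N,k} = C_k · (4^{N−k−1} + ((N−k)/2) · B_{N−k}), B_n = binom(2n,n), and C_k = binom(2k,k)/(k+1). -/
/-- `v N k = C_k (4^(N-k-1) + ((N-k)/2) B_{N-k})`, the number of edges of horizontal
length `2k+1` among all Dyck matchings on `2N` points (as a real number). -/
noncomputable def dyckEdgeCount (N k : ℕ) : ℝ :=
  (catalan k : ℝ) *
    (4 ^ (N - k - 1) + ((N : ℝ) - (k : ℝ)) / 2 * (Nat.choose (2 * (N - k)) (N - k) : ℝ))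

open Filter Topology in
theorem aux_succ (n : ℕ) : ((n : ℝ) + 1) * (Nat.centralBinom (n+1) : ℝ) = 2 * (2 * n + 1) * Nat.centralBinom n := by
  exact_mod_cast Nat.succ_mul_centralBinom_succ n

theorem aux_pos (n : ℕ) : (0 : ℝ) < Nat.centralBinom n := by
  exact_mod_cast Nat.centralBinom_pos n

theorem aux_bound (n : ℕ) : (4 ^ (n+1) : ℝ) ^ 2 ≤ 4 * ((n : ℝ) + 1) * (Nat.centralBinom (n+1) : ℝ) ^ 2 := by
  induction n with
  | zero => norm_num [Nat.centralBinom, Nat.choose]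
  | succ n ih =>
    have h := aux_succ (n+1)
    have hn : (0 : ℝ) ≤ n := Nat.cast_nonneg n
    push_cast at h ⊢
    have h3 : (Nat.centralBinom (n+1+1) : ℝ) = 2 * (2 * ((n:ℝ)+1) + 1) * Nat.centralBinom (n+1) / ((n:ℝ)+1+1) := by
      rw [← h]; field_simp
    rw [h3]
    have h4 : 4 * ((n:ℝ)+1+1) * (2 * (2 * ((n:ℝ)+1) + 1) * (Nat.centralBinom (n+1) : ℝ) / ((n:ℝ)+1+1)) ^ 2
        = 16 * (4 * ((n : ℝ) + 1) * (Nat.centralBinom (n+1) : ℝ) ^ 2) + 16 * (Nat.centralBinom (n+1) : ℝ) ^ 2 / ((n:ℝ)+1+1) := by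
      field_simp
      ring
    rw [h4]
    have h5 : 0 ≤ 16 * (Nat.centralBinom (n+1) : ℝ) ^ 2 / ((n:ℝ)+1+1) := by positivity
    have h6 : ((4:ℝ) ^ (n+1+1)) ^ 2 = 16 * ((4:ℝ) ^ (n+1)) ^ 2 := by ring
    rw [h6]
    linarith

open Filter Topology in
theorem aux_small : Tendsto (fun n : ℕ => (4 ^ n : ℝ) / ((n : ℝ) * Nat.centralBinom n)) atTop (𝓝 0) := by
  have h0 : Tendsto (fun n : ℕ => Real.sqrt (4 / (n : ℝ))) atTop (𝓝 0) := by
    have := (Real.continuous_sqrt.tendsto 0).comp (tendsto_const_div_atTop_nhds_zero_nat (4:ℝ))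
    simpa [Function.comp_def] using this
  refine squeeze_zero' (Eventually.of_forall fun n => by positivity) ?_ h0
  filter_upwards [eventually_ge_atTop 1] with n hn
  obtain ⟨m, rfl⟩ : ∃ m, n = m + 1 := ⟨n - 1, by omega⟩
  apply Real.le_sqrt_of_sq_le
  have hp := aux_pos (m+1)
  have hb := aux_bound m
  push_cast
  rw [div_pow, div_le_div_iff₀ (by positivity) (by positivity)]
  have hm : (0 : ℝ) ≤ (m:ℝ) + 1 := by positivity
  nlinarith [mul_le_mul_of_nonneg_right hb hm]

open Filter Topology in
theorem aux_lin (a b : ℝ) : Tendsto (fun n : ℕ => ((n : ℝ) + a) / ((n : ℝ) + b)) atTop (𝓝 1) := by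
  have h : Tendsto (fun n : ℕ => (n : ℝ) + b) atTop atTop :=
    tendsto_atTop_add_const_right _ _ tendsto_natCast_atTop_atTop
  have h1 : Tendsto (fun n : ℕ => 1 + (a - b) / ((n : ℝ) + b)) atTop (𝓝 (1 + 0)) :=
    tendsto_const_nhds.add (h.const_div_atTop (a - b))
  rw [add_zero] at h1
  refine h1.congr' ?_
  filter_upwards [h.eventually_gt_atTop 0] with n hn
  field_simp
  ring

open Filter Topology in
theorem aux_ratio1 : Tendsto (fun n : ℕ => (Nat.centralBinom n : ℝ) / Nat.centralBinom (n+1)) atTop (𝓝 (1/4)) := by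
  have h := (aux_lin 1 (1/2)).const_mul (1/4)
  rw [mul_one] at h
  refine h.congr fun n => ?_
  have h1 := aux_succ n
  have h2 := aux_pos n
  have h3 := aux_pos (n+1)
  rw [eq_div_iff h3.ne']
  field_simp
  linarith

open Filter Topology in
theorem aux_ratio (k : ℕ) : Tendsto (fun n : ℕ => (Nat.centralBinom n : ℝ) / Nat.centralBinom (n+k)) atTop (𝓝 ((1/4)^k)) := by
  induction k with
  | zero =>
    simp only [add_zero, pow_zero]
    refine tendsto_const_nhds.congr fun n => ?_
    rw [div_self (aux_pos n).ne']
  | succ k ih =>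
    rw [pow_succ]
    refine (ih.mul (aux_ratio1.comp (tendsto_add_atTop_nat k))).congr fun n => ?_
    have h2 := aux_pos (n+k)
    have h3 := aux_pos (n+k+1)
    simp only [Function.comp, ← add_assoc]
    field_simp

theorem link_length_distribution_limit (k : ℕ) :
    Filter.Tendsto
      (fun N : ℕ => dyckEdgeCount N k / ((N : ℝ) * (Nat.choose (2 * N) N : ℝ)))
      Filter.atTop (nhds ((catalan k : ℝ) / (2 * 4 ^ k))) := by
  rw [← Filter.tendsto_add_atTop_iff_nat (k+1)]
  have h1 := (aux_small.comp (Filter.tendsto_add_atTop_nat (k+1))).const_mul ((1/4:ℝ)^(k+1))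
  have h2 := ((aux_lin 1 (k+1)).mul ((aux_ratio k).comp (Filter.tendsto_add_atTop_nat 1))).const_mul (1/2 : ℝ)
  have h3 := (h1.add h2).const_mul (catalan k : ℝ)
  have e : (catalan k : ℝ) * ((1/4:ℝ)^(k+1) * 0 + 1/2 * (1 * (1/4)^k)) = (catalan k : ℝ) / (2 * 4 ^ k) := by
    simp only [one_div_pow, mul_zero, zero_add, one_mul]; field_simp
  rw [e] at h3
  refine h3.congr fun m => ?_
  have hp := aux_pos (m + (k+1))
  have s1 : m + (k+1) - k = m + 1 := by omega
  simp only [dyckEdgeCount, Function.comp, s1, ← Nat.centralBinom_eq_two_mul_choose]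
  have s2 : m + 1 + k = m + (k+1) := by omega
  rw [s2, Nat.add_sub_cancel, one_div_pow, pow_add 4 m (k+1)]
  push_cast
  field_simp
  ring
end

section
/- Let p > −1 be real and k a natural number. Then C_k · Γ(2k+1+p)/Γ(2k+1) = Γ(p+1) · 4^k · Γ(k + (p+1)/2) · Γ(k + 1 + p/2) / (Γ((p+1)/2) · Γ(1 + p/2) · (k+1)! · k!), where C_k = binom(2k,k)/(k+1) is the k-th Catalan number and Γ is the real Gamma function. -/
theorem catalan_aux (k : ℕ) :
    catalan k * (k + 1).factorial * k.factorial = (2 * k).factorial := by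
  have h := succ_mul_catalan_eq_centralBinom k
  have h2 := Nat.choose_mul_factorial_mul_factorial (show k ≤ 2 * k by omega)
  rw [show 2 * k - k = k by omega, ← Nat.centralBinom_eq_two_mul_choose, ← h] at h2
  rw [← h2, Nat.factorial_succ]
  ring

theorem gamma_aux (p : ℝ) (hp : -1 < p) (k : ℕ) :
    Real.Gamma (2 * (k : ℝ) + 1 + p) * (Real.Gamma ((p + 1) / 2) * Real.Gamma (1 + p / 2)) =
      Real.Gamma (p + 1) * 4 ^ k * Real.Gamma ((k : ℝ) + (p + 1) / 2) *
        Real.Gamma ((k : ℝ) + 1 + p / 2) := by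
  induction k with
  | zero => simp [add_comm p 1]; ring
  | succ k ih =>
    have hk : (0 : ℝ) ≤ k := Nat.cast_nonneg k
    have e1 : 2 * ((k + 1 : ℕ) : ℝ) + 1 + p = ((2 * (k : ℝ) + 1 + p) + 1) + 1 := by
      push_cast; ring
    have e2 : ((k + 1 : ℕ) : ℝ) + (p + 1) / 2 = ((k : ℝ) + (p + 1) / 2) + 1 := by
      push_cast; ring
    have e3 : ((k + 1 : ℕ) : ℝ) + 1 + p / 2 = ((k : ℝ) + 1 + p / 2) + 1 := by
      push_cast; ring
    rw [e1, e2, e3, Real.Gamma_add_one (s := 2 * (k : ℝ) + 1 + p + 1) (by linarith),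
      Real.Gamma_add_one (s := 2 * (k : ℝ) + 1 + p) (by linarith),
      Real.Gamma_add_one (s := (k : ℝ) + (p + 1) / 2) (by linarith),
      Real.Gamma_add_one (s := (k : ℝ) + 1 + p / 2) (by linarith)]
    linear_combination (2 * (k : ℝ) + 1 + p + 1) * (2 * (k : ℝ) + 1 + p) * ih

theorem catalan_gamma_hypergeometric_coeff (p : ℝ) (hp : -1 < p) (k : ℕ) :
    (catalan k : ℝ) * Real.Gamma (2 * (k : ℝ) + 1 + p) / Real.Gamma (2 * (k : ℝ) + 1) =
      Real.Gamma (p + 1) * 4 ^ k * Real.Gamma ((k : ℝ) + (p + 1) / 2) *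
        Real.Gamma ((k : ℝ) + 1 + p / 2) /
      (Real.Gamma ((p + 1) / 2) * Real.Gamma (1 + p / 2) *
        ((k + 1).factorial : ℝ) * (k.factorial : ℝ)) := by
  have h1 : (catalan k : ℝ) * (k + 1).factorial * k.factorial = (2 * k).factorial := by
    exact_mod_cast catalan_aux k
  have h2 : Real.Gamma (2 * (k : ℝ) + 1) = (2 * k).factorial := by
    have := Real.Gamma_nat_eq_factorial (2 * k)
    push_cast at this
    exact this
  have ha : Real.Gamma ((p + 1) / 2) ≠ 0 := (Real.Gamma_pos_of_pos (by linarith)).ne'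
  have hb : Real.Gamma (1 + p / 2) ≠ 0 := (Real.Gamma_pos_of_pos (by linarith)).ne'
  have hc : ((2 * k).factorial : ℝ) ≠ 0 := by exact_mod_cast Nat.factorial_ne_zero _
  have hd : ((k + 1).factorial : ℝ) ≠ 0 := by exact_mod_cast Nat.factorial_ne_zero _
  have he : (k.factorial : ℝ) ≠ 0 := by exact_mod_cast Nat.factorial_ne_zero _
  rw [h2, ← gamma_aux p hp k,
    div_eq_div_iff hc (mul_ne_zero (mul_ne_zero (mul_ne_zero ha hb) hd) he), ← h1]
  ring
end

section
/- Let 1/2 < p < 1 be real. Define, for N ≥ 1, E_N(p) = B_N^{−1} · Σ_{k=0}^{N−1} v_{N,k} · Γ(2k+1+p)/(2k)!, where B_N = binom(2N,N), C_k = binom(2k,k)/(k+1), and v_{N,k} = C_k · (4^{N−k−1} + ((N−k)/2) · B_{N−k}). Then the limit as N → ∞ of E_N(p) / N^{1/2 + p} equals 2^p · Γ(p − 1/2) / (4 · Γ(p+1)). -/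
/-- Average cost of the Dyck matching in the exponential-spacings model. -/
noncomputable def dyckCostES (p : ℝ) (N : ℕ) : ℝ :=
  ((Nat.choose (2 * N) N : ℝ))⁻¹ *
    ∑ k ∈ Finset.range N,
      dyckEdgeCount N k * Real.Gamma (2 * (k : ℝ) + 1 + p) / ((2 * k).factorial : ℝ)

open Filter Topology Finset

noncomputable def gq (a : ℝ) (n : ℕ) : ℝ := Real.Gamma (n + a) / (n.factorial : ℝ)

lemma gq_pos {a : ℝ} (ha : 0 < a) (n : ℕ) : 0 < gq a n := by
  unfold gq
  have := Real.Gamma_pos_of_pos (show (0 : ℝ) < n + a by positivity)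
  positivity

lemma gq_succ {a : ℝ} (ha : 0 < a) (n : ℕ) : ((n : ℝ) + 1) * gq a (n + 1) = (n + a) * gq a n := by
  unfold gq
  have h : ((n + 1 : ℕ) : ℝ) + a = (n + a) + 1 := by push_cast; ring
  rw [h, Real.Gamma_add_one (by positivity), Nat.factorial_succ]
  push_cast
  field_simp

lemma gq_shift {a : ℝ} (ha : 0 < a) (n : ℕ) : gq (a + 1) n = (n + a) * gq a n := by
  unfold gq
  have h : (n : ℝ) + (a + 1) = (n + a) + 1 := by ring
  rw [h, Real.Gamma_add_one (by positivity)]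
  ring

lemma gq_vander (n : ℕ) : ∀ {a b : ℝ}, 0 < a → 0 < b →
    ∑ k ∈ range (n + 1), gq a k * gq b (n - k)
      = Real.Gamma a * Real.Gamma b / Real.Gamma (a + b) * gq (a + b) n := by
  induction n with
  | zero =>
    intro a b ha hb
    have := Real.Gamma_pos_of_pos (add_pos ha hb)
    simp [gq]
    field_simp
  | succ n ih =>
    intro a b ha hb
    have hab := add_pos ha hb
    have hG := Real.Gamma_pos_of_pos hab
    have key : ((n : ℝ) + 1) * ∑ k ∈ range (n + 1 + 1), gq a k * gq b (n + 1 - k)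
        = ∑ k ∈ range (n + 1), gq (a + 1) k * gq b (n - k)
          + ∑ k ∈ range (n + 1), gq a k * gq (b + 1) (n - k) := by
      have e : ((n : ℝ) + 1) * ∑ k ∈ range (n + 1 + 1), gq a k * gq b (n + 1 - k)
          = ∑ k ∈ range (n + 1 + 1), (k : ℝ) * gq a k * gq b (n + 1 - k)
            + ∑ k ∈ range (n + 1 + 1), gq a k * (((n + 1 - k : ℕ) : ℝ) * gq b (n + 1 - k)) := by
        rw [mul_sum, ← sum_add_distrib]
        refine sum_congr rfl fun k hk => ?_
        have : k ≤ n + 1 := by simpa [Nat.lt_succ_iff] using hk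
        rw [Nat.cast_sub this]; push_cast; ring
      rw [e]
      congr 1
      · rw [sum_range_succ']
        simp only [Nat.cast_zero, zero_mul, add_zero]
        refine sum_congr rfl fun k hk => ?_
        rw [Nat.add_sub_add_right, gq_shift ha, ← gq_succ ha]; push_cast; ring
      · rw [sum_range_succ]
        simp only [Nat.sub_self, Nat.cast_zero, zero_mul, mul_zero, add_zero]
        refine sum_congr rfl fun k hk => ?_
        have hk' : k ≤ n := by simpa [Nat.lt_succ_iff] using hk
        rw [show n + 1 - k = (n - k) + 1 by omega, gq_shift hb, ← gq_succ hb]; push_cast; ring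
    rw [ih (by linarith) hb, ih ha (by linarith)] at key
    have h1 : a + 1 + b = a + b + 1 := by ring
    have h2 : a + (b + 1) = a + b + 1 := by ring
    rw [h1, h2, Real.Gamma_add_one ha.ne', Real.Gamma_add_one hb.ne', Real.Gamma_add_one hab.ne',
      gq_shift hab, ← gq_succ hab] at key
    have hn : ((n : ℝ) + 1) ≠ 0 := by positivity
    apply mul_left_cancel₀ hn
    rw [key]
    field_simp

lemma gq_asymp {a : ℝ} (ha : 0 < a) :
    Tendsto (fun n : ℕ => gq a n / (n : ℝ) ^ (a - 1)) atTop (𝓝 1) := by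
  have hG := Real.Gamma_pos_of_pos ha
  have h1 := Real.GammaSeq_tendsto_Gamma a
  have hprod : ∀ n : ℕ, Real.Gamma (n + 1 + a) =
      Real.Gamma a * ∏ j ∈ range (n + 1), (a + j) := by
    intro n
    induction n with
    | zero => simp [add_comm (1:ℝ) a, Real.Gamma_add_one ha.ne', mul_comm]
    | succ n ih =>
      rw [prod_range_succ, ← mul_assoc, ← ih]
      rw [show ((n + 1 : ℕ) : ℝ) + 1 + a = (n + 1 + a) + 1 by push_cast; ring,
        Real.Gamma_add_one (by positivity)]
      push_cast; ring
  have h2 : Tendsto (fun n : ℕ => Real.Gamma a / Real.GammaSeq a n) atTop (𝓝 1) := by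
    have h := (tendsto_const_nhds (x := Real.Gamma a)).div h1 hG.ne'
    rw [div_self hG.ne'] at h
    exact h
  have h3 : Tendsto (fun n : ℕ => (n : ℝ) / (n + a)) atTop (𝓝 1) := tendsto_natCast_div_add_atTop a
  have h4 := h2.mul h3
  rw [one_mul] at h4
  refine h4.congr' ?_
  filter_upwards [eventually_gt_atTop 0] with n hn
  have hn' : (0 : ℝ) < n := by exact_mod_cast hn
  have hp : 0 < ∏ j ∈ range (n + 1), (a + (j : ℝ)) := prod_pos fun j _ => by positivity
  have hg : Real.Gamma (n + a) = Real.Gamma a * (∏ j ∈ range (n + 1), (a + j)) / (n + a) := by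
    rw [← hprod, show (n : ℝ) + 1 + a = n + a + 1 by ring, Real.Gamma_add_one (by positivity)]
    field_simp
  have hr : (n : ℝ) ^ a = (n : ℝ) ^ (a - 1) * n := by
    rw [Real.rpow_sub_one hn'.ne']; field_simp
  have hr0 : 0 < (n : ℝ) ^ (a - 1) := by positivity
  unfold gq Real.GammaSeq
  rw [hg, hr]
  field_simp

lemma gq_mono {a : ℝ} (ha : 1 ≤ a) : Monotone (gq a) := by
  refine monotone_nat_of_le_succ fun n => ?_
  have h := gq_succ (by linarith : 0 < a) n
  have hp := gq_pos (by linarith : 0 < a) n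
  have hn : (0 : ℝ) < (n : ℝ) + 1 := by positivity
  refine le_of_mul_le_mul_left ?_ hn
  rw [h]
  gcongr

lemma toeplitz {a b f : ℕ → ℝ} {c : ℝ} (ha : ∀ k, 0 < a k) (hb : ∀ k, 0 < b k) (hm : Monotone b)
    (hf : Tendsto (fun k => f k / a k) atTop (𝓝 c))
    (hs : Tendsto (fun n => b n / ∑ k ∈ range (n + 1), a k * b (n - k)) atTop (𝓝 0)) :
    Tendsto (fun n => (∑ k ∈ range (n + 1), f k * b (n - k)) /
      ∑ k ∈ range (n + 1), a k * b (n - k)) atTop (𝓝 c) := by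
  have sp : ∀ n, 0 < ∑ k ∈ range (n + 1), a k * b (n - k) := fun n =>
    sum_pos (fun k _ => mul_pos (ha k) (hb _)) (by simp)
  set s : ℕ → ℝ := fun n => ∑ k ∈ range (n + 1), a k * b (n - k) with hsdef
  rw [Metric.tendsto_atTop] at hf ⊢
  intro ε hε
  obtain ⟨K, hK⟩ := hf (ε / 2) (by positivity)
  set M := ∑ k ∈ range K, |f k - c * a k| with hM
  have hs2 := hs.const_mul M
  rw [mul_zero, Metric.tendsto_atTop] at hs2
  obtain ⟨L, hL⟩ := hs2 (ε / 2) (by positivity)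
  refine ⟨L, fun n hn => ?_⟩
  have hLn := hL n hn
  have hM0 : 0 ≤ M := sum_nonneg fun k _ => abs_nonneg _
  rw [Real.dist_eq, sub_zero] at hLn
  have hLn := (le_abs_self _).trans_lt hLn
  have hsn : 0 < s n := sp n
  rw [Real.dist_eq]
  have e : (∑ k ∈ range (n + 1), f k * b (n - k)) / s n - c
      = (∑ k ∈ range (n + 1), (f k - c * a k) * b (n - k)) / s n := by
    rw [sub_eq_iff_eq_add, div_eq_iff hsn.ne', add_mul, div_mul_cancel₀ _ hsn.ne']
    simp only [hsdef]
    rw [mul_sum, ← sum_add_distrib]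
    exact sum_congr rfl fun k _ => by ring
  change |(∑ k ∈ range (n + 1), f k * b (n - k)) / s n - c| < ε
  rw [e, abs_div, abs_of_pos hsn, div_lt_iff₀ hsn]
  have hb1 : ∀ k ∈ range (n + 1), |(f k - c * a k) * b (n - k)| ≤
      (if k < K then |f k - c * a k| else 0) * b n + ε / 2 * (a k * b (n - k)) := by
    intro k _
    rw [abs_mul, abs_of_pos (hb _)]
    have h0 := mul_pos (ha k) (hb (n - k))
    split_ifs with hk
    · have : |f k - c * a k| * b (n - k) ≤ |f k - c * a k| * b n := by
        gcongr; exact hm (Nat.sub_le _ _)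
      have : 0 < ε / 2 * (a k * b (n - k)) := by positivity
      linarith
    · have h := hK k (by omega)
      rw [Real.dist_eq] at h
      have h' : |f k - c * a k| ≤ ε / 2 * a k := by
        have e2 : f k - c * a k = (f k / a k - c) * a k := by
          have := (ha k).ne'
          field_simp
        rw [e2, abs_mul, abs_of_pos (ha k)]
        exact mul_le_mul_of_nonneg_right h.le (ha k).le
      have := mul_le_mul_of_nonneg_right h' (hb (n - k)).le
      linarith
  have hb2 : ∑ k ∈ range (n + 1), (if k < K then |f k - c * a k| else 0) ≤ M := by
    rw [← sum_filter]
    refine sum_le_sum_of_subset_of_nonneg ?_ fun _ _ _ => abs_nonneg _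
    intro k hk
    simp at hk ⊢
    exact hk.2
  calc _ ≤ ∑ k ∈ range (n + 1), |(f k - c * a k) * b (n - k)| := abs_sum_le_sum_abs _ _
    _ ≤ _ := sum_le_sum hb1
    _ = (∑ k ∈ range (n + 1), (if k < K then |f k - c * a k| else 0)) * b n + ε / 2 * s n := by
      rw [sum_add_distrib, ← sum_mul, ← mul_sum]
    _ ≤ M * b n + ε / 2 * s n := by
      have := (hb n).le
      gcongr
    _ < ε * s n := by
      have : M * b n < ε / 2 * s n := by
        rw [← mul_div_assoc, div_lt_iff₀ hsn] at hLn
        exact hLn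
      linarith

/-- central binomial as a Gamma quotient -/
lemma central_gq (n : ℕ) : (Nat.choose (2 * n) n : ℝ) = 4 ^ n * gq (1 / 2) n / √Real.pi := by
  have hpi : 0 < √Real.pi := Real.sqrt_pos.mpr Real.pi_pos
  induction n with
  | zero => simp [gq, Real.Gamma_one_half_eq, hpi.ne']; simpa [one_div] using (by
      rw [← one_div, Real.Gamma_one_half_eq, div_self hpi.ne'] : (1:ℝ) = Real.Gamma (2⁻¹) / √Real.pi)
  | succ n ih =>
    have h := Nat.succ_mul_centralBinom_succ n
    simp only [Nat.centralBinom] at h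
    have h' : ((n : ℝ) + 1) * (Nat.choose (2 * (n + 1)) (n + 1) : ℝ)
        = 2 * (2 * n + 1) * (Nat.choose (2 * n) n : ℝ) := by exact_mod_cast h
    have hn : ((n : ℝ) + 1) ≠ 0 := by positivity
    apply mul_left_cancel₀ hn
    rw [h', ih]
    have := gq_succ (show (0:ℝ) < 1 / 2 by norm_num) n
    rw [pow_succ]
    linear_combination (-(4 ^ n * 4 / √Real.pi)) * this

noncomputable def fq (p : ℝ) (k : ℕ) : ℝ :=
  2 ^ p / √Real.pi * (gq ((1 + p) / 2) k * gq (1 + p / 2) k / (k + 1))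

lemma fq_eq (p : ℝ) (k : ℕ) :
    (catalan k : ℝ) * Real.Gamma (2 * (k : ℝ) + 1 + p) / ((2 * k).factorial : ℝ)
      = 4 ^ k * fq p k := by
  have hc : (catalan k : ℝ) * (k + 1) * (k.factorial * k.factorial) = (2 * k).factorial := by
    have h1 := succ_mul_catalan_eq_centralBinom k
    have h2 := Nat.choose_mul_factorial_mul_factorial (show k ≤ 2 * k by omega)
    rw [show 2 * k - k = k by omega] at h2
    rw [Nat.centralBinom] at h1
    rw [← h2, ← h1]
    push_cast; ring
  have hd := Real.Gamma_mul_Gamma_add_half ((k : ℝ) + (1 + p) / 2)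
  rw [show (k : ℝ) + (1 + p) / 2 + 1 / 2 = k + (1 + p / 2) by ring,
    show 2 * ((k : ℝ) + (1 + p) / 2) = 2 * k + 1 + p by ring,
    show (1 : ℝ) - (2 * k + 1 + p) = -(p + 2 * k) by ring, Real.rpow_neg (by norm_num),
    Real.rpow_add (by norm_num), Real.rpow_mul (by norm_num)] at hd
  rw [show (2 : ℝ) ^ (2 : ℝ) = 4 by norm_num, Real.rpow_natCast] at hd
  have hpi : 0 < √Real.pi := Real.sqrt_pos.mpr Real.pi_pos
  have h2p : 0 < (2 : ℝ) ^ p := by positivity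
  have hcat : (catalan k : ℝ) ≠ 0 := by
    intro h
    rw [h] at hc
    have : ((2 * k).factorial : ℝ) ≠ 0 := by positivity
    simp at hc
    exact this hc.symm
  unfold fq gq
  rw [← hc]
  have e : Real.Gamma ((k : ℝ) + (1 + p) / 2) / k.factorial *
      (Real.Gamma ((k : ℝ) + (1 + p / 2)) / k.factorial) =
      Real.Gamma ((k : ℝ) + (1 + p) / 2) * Real.Gamma ((k : ℝ) + (1 + p / 2)) /
      (k.factorial * k.factorial) := by ring
  rw [e, hd]
  field_simp

noncomputable def bq (j : ℕ) : ℝ := gq 1 j + gq (3 / 2) j * (2 / √Real.pi)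

lemma gq_one (j : ℕ) : gq 1 j = 1 := by
  unfold gq
  rw [Real.Gamma_nat_eq_factorial, div_self (by positivity)]

lemma edge_eq (m : ℕ) : (4 : ℝ) ^ m + ((m : ℝ) + 1) / 2 * (Nat.choose (2 * (m + 1)) (m + 1) : ℝ)
    = 4 ^ m * bq m := by
  rw [central_gq, bq, gq_one, show (3 / 2 : ℝ) = 1 / 2 + 1 by norm_num, gq_shift (by norm_num),
    ← gq_succ (by norm_num)]
  rw [pow_succ]; ring

lemma cost_eq (p : ℝ) (n : ℕ) : dyckCostES p (n + 1) =
    √Real.pi / (4 * gq (1 / 2) (n + 1)) * ∑ k ∈ range (n + 1), fq p k * bq (n - k) := by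
  have hpi : 0 < √Real.pi := Real.sqrt_pos.mpr Real.pi_pos
  have hg := gq_pos (show (0:ℝ) < 1 / 2 by norm_num) (n + 1)
  unfold dyckCostES
  have e : ∑ k ∈ range (n + 1), dyckEdgeCount (n + 1) k * Real.Gamma (2 * (k : ℝ) + 1 + p) /
      ((2 * k).factorial : ℝ) = 4 ^ n * ∑ k ∈ range (n + 1), fq p k * bq (n - k) := by
    rw [mul_sum]
    refine sum_congr rfl fun k hk => ?_
    have hk' : k ≤ n := by simpa [Nat.lt_succ_iff] using hk
    unfold dyckEdgeCount
    obtain ⟨m, rfl⟩ := Nat.exists_eq_add_of_le hk'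
    rw [show k + m + 1 - k - 1 = m by omega, show k + m + 1 - k = m + 1 by omega,
      show k + m - k = m by omega,
      show ((k + m + 1 : ℕ) : ℝ) - k = m + 1 by push_cast; ring, edge_eq]
    have := fq_eq p k
    rw [pow_add]
    linear_combination (4 ^ m * bq m) * this
  rw [e, central_gq, pow_succ]
  field_simp

theorem dyckCostES_leading_high_p (p : ℝ) (hp0 : 1 / 2 < p) (hp1 : p < 1) :
    Filter.Tendsto
      (fun N : ℕ => dyckCostES p N / (N : ℝ) ^ (1 / 2 + p))
      Filter.atTop
      (nhds ((2 : ℝ) ^ p * Real.Gamma (p - 1 / 2) / (4 * Real.Gamma (p + 1)))) := by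
  have hpi : 0 < √Real.pi := Real.sqrt_pos.mpr Real.pi_pos
  have hq : 0 < p - 1 / 2 := by linarith
  have hG1 := Real.Gamma_pos_of_pos hq
  have hG2 := Real.Gamma_pos_of_pos (show 0 < p + 1 / 2 by linarith)
  have hG3 := Real.Gamma_pos_of_pos (show 0 < p + 1 by linarith)
  have hneg : ∀ y : ℝ, 0 < y → Tendsto (fun n : ℕ => (n : ℝ) ^ (-y)) atTop (𝓝 0) := fun y hy =>
    (tendsto_rpow_neg_atTop hy).comp tendsto_natCast_atTop_atTop
  set s : ℕ → ℝ := fun n => ∑ k ∈ range (n + 1), gq (p - 1 / 2) k * bq (n - k) with hsdef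
  have hG32 : Real.Gamma (3 / 2) = √Real.pi / 2 := by
    rw [show (3 / 2 : ℝ) = 1 / 2 + 1 by norm_num, Real.Gamma_add_one (by norm_num),
      Real.Gamma_one_half_eq]; ring
  have hs : ∀ n, s n = Real.Gamma (p - 1 / 2) / Real.Gamma (p + 1 / 2) * gq (p + 1 / 2) n +
      Real.Gamma (p - 1 / 2) / Real.Gamma (p + 1) * gq (p + 1) n := by
    intro n
    have h1 := gq_vander n hq one_pos
    have h2 := gq_vander n hq (show (0:ℝ) < 3 / 2 by norm_num)
    rw [show p - 1 / 2 + 1 = p + 1 / 2 by ring, Real.Gamma_one, mul_one] at h1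
    rw [show p - 1 / 2 + 3 / 2 = p + 1 by ring, hG32] at h2
    rw [← h1]
    have e : Real.Gamma (p - 1 / 2) / Real.Gamma (p + 1) * gq (p + 1) n =
      (Real.Gamma (p - 1 / 2) * (√Real.pi / 2) / Real.Gamma (p + 1) * gq (p + 1) n)
        * (2 / √Real.pi) := by field_simp
    rw [e, ← h2, sum_mul, ← sum_add_distrib]
    exact sum_congr rfl fun k _ => by unfold bq; ring
  -- asymptotics of s
  have hsa : Tendsto (fun n : ℕ => s n / (n : ℝ) ^ p) atTop
      (𝓝 (Real.Gamma (p - 1 / 2) / Real.Gamma (p + 1))) := by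
    have h1 := ((gq_asymp (show 0 < p + 1 / 2 by linarith)).mul (hneg (1 / 2) (by norm_num))).const_mul
      (Real.Gamma (p - 1 / 2) / Real.Gamma (p + 1 / 2))
    have h2 := (gq_asymp (show 0 < p + 1 by linarith)).const_mul
      (Real.Gamma (p - 1 / 2) / Real.Gamma (p + 1))
    have h3 := h1.add h2
    simp only [mul_zero, mul_one, zero_add] at h3
    refine h3.congr' ?_
    filter_upwards [eventually_gt_atTop 0] with n hn
    have hn' : (0 : ℝ) < n := by exact_mod_cast hn
    rw [hs, show p + 1 - 1 = p by ring, show p + 1 / 2 - 1 = p - 1 / 2 by ring,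
      Real.rpow_sub hn', Real.rpow_neg hn'.le]
    have := Real.rpow_pos_of_pos hn' p
    have := Real.rpow_pos_of_pos hn' (1 / 2)
    field_simp
  have hba : Tendsto (fun n : ℕ => bq n / (n : ℝ) ^ p) atTop (𝓝 0) := by
    have h1 := hneg p (by linarith)
    have h2 := ((gq_asymp (show (0:ℝ) < 3 / 2 by norm_num)).mul (hneg (p - 1 / 2) hq)).mul_const
      (2 / √Real.pi)
    have h3 := h1.add h2
    simp only [mul_zero, zero_mul, zero_add] at h3
    refine h3.congr' ?_
    filter_upwards [eventually_gt_atTop 0] with n hn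
    have hn' : (0 : ℝ) < n := by exact_mod_cast hn
    unfold bq
    rw [gq_one, Real.rpow_neg hn'.le, Real.rpow_neg hn'.le,
      show (3 / 2 - 1 : ℝ) = 1 / 2 by norm_num, Real.rpow_sub hn']
    have := Real.rpow_pos_of_pos hn' p
    have := Real.rpow_pos_of_pos hn' (1 / 2)
    field_simp
  have hbs : Tendsto (fun n => bq n / s n) atTop (𝓝 0) := by
    have h := hba.div hsa (by positivity)
    rw [zero_div] at h
    refine h.congr' ?_
    filter_upwards [eventually_gt_atTop 0] with n hn
    have hn' : (0 : ℝ) < n := by exact_mod_cast hn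
    have := Real.rpow_pos_of_pos hn' p
    exact div_div_div_cancel_right₀ this.ne' _ _
  have hfa : Tendsto (fun k => fq p k / gq (p - 1 / 2) k) atTop (𝓝 (2 ^ p / √Real.pi)) := by
    have h1 := gq_asymp (show 0 < (1 + p) / 2 by linarith)
    have h2 := gq_asymp (show 0 < 1 + p / 2 by linarith)
    have h3 := gq_asymp hq
    have h4 : Tendsto (fun n : ℕ => (n : ℝ) / (n + 1)) atTop (𝓝 1) :=
      tendsto_natCast_div_add_atTop 1
    have h5 := ((((h1.mul h2).mul h4).div h3 one_ne_zero)).const_mul (2 ^ p / √Real.pi)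
    simp only [mul_one, div_one] at h5
    refine h5.congr' ?_
    filter_upwards [eventually_gt_atTop 0] with n hn
    have hn' : (0 : ℝ) < n := by exact_mod_cast hn
    have hg := gq_pos hq n
    have e : (n : ℝ) ^ ((1 + p) / 2 - 1) * (n : ℝ) ^ (1 + p / 2 - 1) =
        (n : ℝ) ^ (p - 1 / 2 - 1) * n := by
      rw [← Real.rpow_add hn', ← Real.rpow_add_one hn'.ne']
      congr 1; ring
    have a1 := Real.rpow_pos_of_pos hn' ((1 + p) / 2 - 1)
    have a2 := Real.rpow_pos_of_pos hn' (1 + p / 2 - 1)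
    have a3 := Real.rpow_pos_of_pos hn' (p - 1 / 2 - 1)
    unfold fq
    simp only [Pi.div_apply]
    generalize (n : ℝ) ^ ((1 + p) / 2 - 1) = x at *
    generalize (n : ℝ) ^ (1 + p / 2 - 1) = y at *
    generalize (n : ℝ) ^ (p - 1 / 2 - 1) = z at *
    rw [div_mul_div_comm (gq ((1 + p) / 2) n) x, e]
    field_simp
  have hT := toeplitz (f := fq p) (b := bq) (fun k => gq_pos hq k)
    (fun k => add_pos (gq_pos one_pos k)
      (mul_pos (gq_pos (by norm_num) k) (by positivity)))
    ((gq_mono le_rfl).add ((gq_mono (by norm_num)).mul_const (by positivity))) hfa hbs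
  have hT2 := hT.mul hsa
  have hg12 := ((gq_asymp (show (0:ℝ) < 1 / 2 by norm_num)).comp (tendsto_add_atTop_nat 1))
  have hr : Tendsto (fun n : ℕ => ((n : ℝ) / (n + 1)) ^ p) atTop (𝓝 1) := by
    have h4 : Tendsto (fun n : ℕ => (n : ℝ) / (n + 1)) atTop (𝓝 1) :=
      tendsto_natCast_div_add_atTop 1
    simpa using h4.rpow_const (p := p) (Or.inl one_ne_zero)
  have hF := ((hT2.mul hr).div hg12 one_ne_zero).const_mul (√Real.pi / 4)
  rw [← tendsto_add_atTop_iff_nat 1]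
  have hc : √Real.pi / 4 * (2 ^ p / √Real.pi * (Real.Gamma (p - 1 / 2) / Real.Gamma (p + 1)) * 1 / 1)
      = (2 : ℝ) ^ p * Real.Gamma (p - 1 / 2) / (4 * Real.Gamma (p + 1)) := by
    field_simp
  rw [hc] at hF
  refine hF.congr' ?_
  filter_upwards [eventually_gt_atTop 0] with n hn
  have hn' : (0 : ℝ) < n := by exact_mod_cast hn
  have hn1 : (0 : ℝ) < (n : ℝ) + 1 := by positivity
  have hsn : 0 < s n := by
    rw [hs]
    have := gq_pos (show 0 < p + 1 / 2 by linarith) n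
    have := gq_pos (show 0 < p + 1 by linarith) n
    positivity
  have hgn := gq_pos (show (0:ℝ) < 1 / 2 by norm_num) (n + 1)
  rw [cost_eq]
  simp only [Pi.div_apply, Function.comp]
  change √Real.pi / 4 * ((∑ k ∈ range (n + 1), fq p k * bq (n - k)) / s n * (s n / (n : ℝ) ^ p) *
    ((n : ℝ) / (n + 1)) ^ p / (gq (1 / 2) (n + 1) / ((n + 1 : ℕ) : ℝ) ^ (1 / 2 - 1 : ℝ))) = _
  push_cast
  rw [Real.div_rpow hn'.le hn1.le, show (1 / 2 - 1 : ℝ) = -(1 / 2) by norm_num,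
    Real.rpow_neg hn1.le, Real.rpow_add hn1]
  have a1 := Real.rpow_pos_of_pos hn' p
  have a2 := Real.rpow_pos_of_pos hn1 p
  have a3 := Real.rpow_pos_of_pos hn1 (1 / 2)
  field_simp
end

section
/- Let 0 < p < 1/2 be real. Define, for N ≥ 1, E_N(p) = B_N^{−1} · Σ_{k=0}^{N−1} v_{N,k} · Γ(2k+1+p)/(2k)!, where B_N = binom(2N,N), C_k = binom(2k,k)/(k+1), and v_{N,k} = C_k · (4^{N−k−1} + ((N−k)/2) · B_{N−k}). Then the limit as N → ∞ of E_N(p) / N equals Γ(1/2 − p) · Γ(p+1) / (2^p · √π · Γ(2 − p)). -/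
open Filter Topology MeasureTheory

lemma aux_beta_integrable {u v : ℝ} (hu : 0 < u) (hv : 0 < v) :
    IntegrableOn (fun x : ℝ => x ^ (u - 1) * (1 - x) ^ (v - 1)) (Set.Ioo 0 1) := by
  have h := Complex.betaIntegral_convergent (u := (u : ℂ)) (v := (v : ℂ)) (by simpa) (by simpa)
  rw [intervalIntegrable_iff_integrableOn_Ioo_of_le (by norm_num)] at h
  have h2 := h.re
  refine (integrableOn_congr_fun ?_ measurableSet_Ioo).mp h2
  rintro x ⟨hx1, hx2⟩
  have h1 : ((x : ℂ) ^ ((u : ℂ) - 1)) = ((x ^ (u - 1) : ℝ) : ℂ) := by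
    rw [Complex.ofReal_cpow hx1.le]; push_cast; rfl
  have h3 : ((1 - (x : ℂ)) ^ ((v : ℂ) - 1)) = (((1 - x) ^ (v - 1) : ℝ) : ℂ) := by
    rw [Complex.ofReal_cpow (by linarith)]; push_cast; rfl
  simp only [h1, h3, ← Complex.ofReal_mul, RCLike.re_to_complex, Complex.ofReal_re]

lemma aux_beta_integral {u v : ℝ} (hu : 0 < u) (hv : 0 < v) :
    ∫ x in Set.Ioo (0 : ℝ) 1, x ^ (u - 1) * (1 - x) ^ (v - 1) =
      Real.Gamma u * Real.Gamma v / Real.Gamma (u + v) := by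
  have h := Complex.betaIntegral_eq_Gamma_mul_div (u : ℂ) (v : ℂ) (by simpa) (by simpa)
  rw [Complex.betaIntegral, intervalIntegral.integral_of_le (by norm_num),
    integral_Ioc_eq_integral_Ioo, ← Complex.ofReal_add, Complex.Gamma_ofReal, Complex.Gamma_ofReal,
    Complex.Gamma_ofReal, ← Complex.ofReal_mul, ← Complex.ofReal_div] at h
  apply Complex.ofReal_injective
  rw [← h, ← integral_complex_ofReal]
  refine setIntegral_congr_fun measurableSet_Ioo ?_
  rintro x ⟨hx1, hx2⟩
  have h1 : ((x : ℂ) ^ ((u : ℂ) - 1)) = ((x ^ (u - 1) : ℝ) : ℂ) := by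
    rw [Complex.ofReal_cpow hx1.le]; push_cast; rfl
  have h3 : ((1 - (x : ℂ)) ^ ((v : ℂ) - 1)) = (((1 - x) ^ (v - 1) : ℝ) : ℂ) := by
    rw [Complex.ofReal_cpow (by linarith)]; push_cast; rfl
  simp only [h1, h3, ← Complex.ofReal_mul]

lemma aux_Gamma_poch {a : ℝ} (ha : 0 < a) (n : ℕ) :
    Real.Gamma (a + n) = Real.Gamma a * (ascPochhammer ℝ n).eval a := by
  induction n with
  | zero => simp
  | succ n ih =>
    rw [ascPochhammer_succ_eval, ← mul_assoc, ← ih]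
    push_cast
    rw [← add_assoc, Real.Gamma_add_one (by positivity)]
    ring

lemma aux_binom {a : ℝ} (ha : 0 < a) {t : ℝ} (h0 : 0 < t) (h1 : t < 1) :
    HasSum (fun n : ℕ => Real.Gamma (a + n) / (n.factorial : ℝ) * t ^ n)
      (Real.Gamma a * (1 - t) ^ (-a)) := by
  have h := (Real.one_div_one_sub_rpow_hasFPowerSeriesOnBall_zero a).hasSum (y := t)
    (by
      rw [Metric.mem_eball, edist_zero_right, Real.enorm_eq_ofReal h0.le]
      simpa using h1)
  simp only [FormalMultilinearSeries.ofScalars_apply_eq, zero_add] at h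
  have h2 := h.mul_left (Real.Gamma a)
  rw [Real.rpow_neg (by linarith), ← one_div]
  convert! h2 using 2 with n
  rw [aux_Gamma_poch ha, ← Ring.multichoose_eq]
  have := Ring.factorial_nsmul_multichoose_eq_ascPochhammer a n
  rw [Polynomial.ascPochhammer_smeval_eq_eval, nsmul_eq_mul] at this
  rw [← this]
  have : (n.factorial : ℝ) ≠ 0 := by positivity
  field_simp
  simp

lemma aux_gauss {a b c : ℝ} (ha : 0 < a) (hb : 0 < b) (hc : b < c) (habc : a + b < c) :
    HasSum (fun k : ℕ => Real.Gamma (a + k) * Real.Gamma (b + k) /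
        ((k.factorial : ℝ) * Real.Gamma (c + k)))
      (Real.Gamma a * Real.Gamma b * Real.Gamma (c - a - b) /
        (Real.Gamma (c - a) * Real.Gamma (c - b))) := by
  have key : HasSum (fun k : ℕ => ∫ x in Set.Ioo (0 : ℝ) 1,
      (Real.Gamma (a + k) / (k.factorial : ℝ)) *
        (x ^ ((b + k) - 1) * (1 - x) ^ ((c - b) - 1)))
      (∫ x in Set.Ioo (0 : ℝ) 1,
        Real.Gamma a * (x ^ (b - 1) * (1 - x) ^ ((c - a - b) - 1))) := by
    have hs : ∀ x ∈ Set.Ioo (0 : ℝ) 1, HasSum (fun k : ℕ =>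
      (Real.Gamma (a + k) / (k.factorial : ℝ)) *
        (x ^ ((b + k) - 1) * (1 - x) ^ ((c - b) - 1)))
      (Real.Gamma a * (x ^ (b - 1) * (1 - x) ^ ((c - a - b) - 1))) := by
      rintro x ⟨hx0, hx1⟩
      have := (aux_binom ha hx0 hx1).mul_right (x ^ (b - 1) * (1 - x) ^ ((c - b) - 1))
      convert! this using 1
      · ext k
        rw [show b + k - 1 = (b - 1) + k by ring, Real.rpow_add hx0, Real.rpow_natCast]
        ring
      · rw [show c - a - b - 1 = -a + (c - b - 1) by ring, Real.rpow_add (by linarith)]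
        ring
    refine hasSum_integral_of_dominated_convergence (fun k x =>
      (Real.Gamma (a + k) / (k.factorial : ℝ)) *
        (x ^ ((b + k) - 1) * (1 - x) ^ ((c - b) - 1))) ?_ ?_ ?_ ?_ ?_
    · intro n
      exact Measurable.aestronglyMeasurable (by fun_prop)
    · intro n
      refine ae_restrict_of_forall_mem measurableSet_Ioo ?_
      rintro x ⟨hx0, hx1⟩
      have : 0 < Real.Gamma (a + n) := Real.Gamma_pos_of_pos (by positivity)
      have : 0 < 1 - x := by linarith
      rw [Real.norm_of_nonneg (by positivity)]
    · exact ae_restrict_of_forall_mem measurableSet_Ioo (fun x hx => (hs x hx).summable)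
    · have := (aux_beta_integrable hb (v := c - a - b) (by linarith)).const_mul (Real.Gamma a)
      refine (integrableOn_congr_fun ?_ measurableSet_Ioo).mp this
      intro x hx
      exact (hs x hx).tsum_eq.symm
    · exact ae_restrict_of_forall_mem measurableSet_Ioo hs
  have hcb := Real.Gamma_pos_of_pos (show 0 < c - b by linarith)
  convert! key.mul_right (Real.Gamma (c - b))⁻¹ using 1
  · ext k
    rw [integral_const_mul, aux_beta_integral (by positivity) (by linarith),
      show b + k + (c - b) = c + k by ring]
    field_simp
  · rw [integral_const_mul, aux_beta_integral (by positivity) (by linarith),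
      show b + (c - a - b) = c - a by ring]
    field_simp

/-- the normalized coefficients -/
noncomputable def auxA (p : ℝ) (k : ℕ) : ℝ :=
  (catalan k : ℝ) / 4 ^ k * (Real.Gamma (2 * (k : ℝ) + 1 + p) / ((2 * k).factorial : ℝ))

lemma auxA_nonneg {p : ℝ} (hp0 : 0 < p) (k : ℕ) : 0 ≤ auxA p k := by
  have : 0 < Real.Gamma (2 * (k : ℝ) + 1 + p) := Real.Gamma_pos_of_pos (by positivity)
  unfold auxA
  positivity

lemma auxA_eq {p : ℝ} (hp0 : 0 < p) (k : ℕ) :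
    auxA p k = 2 ^ p / √Real.pi * (Real.Gamma ((1 + p) / 2 + k) * Real.Gamma (1 + p / 2 + k) /
        ((k.factorial : ℝ) * Real.Gamma (2 + k))) := by
  have h := Real.Gamma_mul_Gamma_add_half ((1 + p) / 2 + k)
  rw [show (1 + p) / 2 + (k : ℝ) + 1 / 2 = 1 + p / 2 + k by ring,
    show 2 * ((1 + p) / 2 + (k : ℝ)) = 2 * k + 1 + p by ring,
    show 1 - (2 * (k : ℝ) + 1 + p) = -p - ((2 * k : ℕ) : ℝ) by push_cast; ring,
    Real.rpow_sub (by norm_num), Real.rpow_natCast, Real.rpow_neg (by norm_num), pow_mul] at h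
  have h2 : Real.Gamma (2 + k) = ((k + 1).factorial : ℝ) := by
    rw [← Real.Gamma_nat_eq_factorial]; push_cast; congr 1; ring
  have h3 : (catalan k : ℝ) * ((k.factorial : ℝ) * ((k + 1).factorial : ℝ))
      = ((2 * k).factorial : ℝ) := by
    have h4 := succ_mul_catalan_eq_centralBinom k
    have h5 := Nat.choose_mul_factorial_mul_factorial (show k ≤ 2 * k by omega)
    rw [← Nat.centralBinom_eq_two_mul_choose, ← h4, show 2 * k - k = k by omega] at h5
    rw [← h5, Nat.factorial_succ]
    push_cast
    ring
  rw [h, h2, auxA, ← h3]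
  have hc : (catalan k : ℝ) ≠ 0 := by
    intro h0
    rw [h0, zero_mul] at h3
    exact (Nat.factorial_ne_zero (2 * k)) (by exact_mod_cast h3.symm)
  have : 0 < √Real.pi := Real.sqrt_pos.mpr Real.pi_pos
  have : (0:ℝ) < 2 ^ p := by positivity
  field_simp
  norm_num

lemma auxA_hasSum {p : ℝ} (hp0 : 0 < p) (hp1 : p < 1 / 2) :
    HasSum (auxA p) (2 * (Real.Gamma (1 / 2 - p) * Real.Gamma (p + 1) /
        ((2 : ℝ) ^ p * √Real.pi * Real.Gamma (2 - p)))) := by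
  have h := (aux_gauss (a := (1 + p) / 2) (b := 1 + p / 2) (c := 2) (by positivity) (by positivity)
    (by linarith) (by linarith)).mul_left (2 ^ p / √Real.pi)
  convert! h using 1
  · ext k; exact auxA_eq hp0 k
  · have e1 := Real.Gamma_mul_Gamma_add_half ((1 + p) / 2)
    have e2 := Real.Gamma_mul_Gamma_add_half (1 - p / 2)
    rw [show (1 + p) / 2 + 1 / 2 = 1 + p / 2 by ring, show 2 * ((1 + p) / 2) = p + 1 by ring,
      show 1 - (p + 1) = -p by ring, Real.rpow_neg (by norm_num)] at e1
    rw [show 1 - p / 2 + 1 / 2 = 2 - (1 + p) / 2 by ring, show 2 * (1 - p / 2) = 2 - p by ring,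
      show 1 - (2 - p) = p - 1 by ring, Real.rpow_sub (by norm_num), Real.rpow_one,
      show 1 - p / 2 = 2 - (1 + p / 2) by ring, mul_comm] at e2
    rw [e1, e2, show 2 - (1 + p) / 2 - (1 + p / 2) = 1 / 2 - p by ring]
    have : 0 < √Real.pi := Real.sqrt_pos.mpr Real.pi_pos
    have : (0:ℝ) < 2 ^ p := by positivity
    have : 0 < Real.Gamma (2 - p) := Real.Gamma_pos_of_pos (by linarith)
    field_simp

/-- `n B_n / 4^n` -/
noncomputable def auxW (n : ℕ) : ℝ := n * (Nat.choose (2 * n) n : ℝ) / 4 ^ n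

lemma auxW_succ (n : ℕ) : auxW (n + 1) * (2 * n) = auxW n * (2 * n + 1) := by
  have h := Nat.succ_mul_centralBinom_succ n
  simp only [Nat.centralBinom_eq_two_mul_choose] at h
  have h' : ((n : ℝ) + 1) * ((2 * (n + 1)).choose (n + 1) : ℝ)
    = 2 * (2 * n + 1) * ((2 * n).choose n : ℝ) := by exact_mod_cast h
  unfold auxW
  push_cast
  rw [h', pow_succ]
  field_simp
  ring

lemma auxW_one : auxW 1 = 1 / 2 := by norm_num [auxW]

lemma auxW_nonneg (n : ℕ) : 0 ≤ auxW n := by unfold auxW; positivity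

lemma auxW_pos {n : ℕ} (hn : 1 ≤ n) : 0 < auxW n := by
  have : 0 < (2 * n).choose n := Nat.choose_pos (by omega)
  unfold auxW; positivity

lemma auxW_mono : Monotone auxW := by
  refine monotone_nat_of_le_succ fun n => ?_
  rcases Nat.eq_zero_or_pos n with rfl | hn
  · simpa [auxW] using auxW_nonneg 1
  · have h := auxW_succ n
    have hn' : (0 : ℝ) < n := by exact_mod_cast hn
    have := auxW_nonneg n
    by_contra! hlt
    nlinarith

lemma auxW_sq {n : ℕ} (hn : 1 ≤ n) : (n : ℝ) / 4 ≤ auxW n ^ 2 := by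
  induction n, hn using Nat.le_induction with
  | base => rw [auxW_one]; norm_num
  | succ n hn ih =>
    have h := auxW_succ n
    have hn' : (0 : ℝ) < n := by exact_mod_cast hn
    have h2 : auxW (n + 1) = auxW n * (2 * n + 1) / (2 * n) := by
      field_simp; linarith
    rw [h2, div_pow, mul_pow, le_div_iff₀ (by positivity)]
    push_cast
    nlinarith [mul_le_mul_of_nonneg_right ih (sq_nonneg (2 * (n : ℝ) + 1))]

lemma auxW_tendsto : Tendsto auxW atTop atTop := by
  have h : Tendsto (fun n => auxW n ^ 2) atTop atTop := by
    refine tendsto_atTop_mono' atTop (f₁ := fun n : ℕ => (n : ℝ) / 4) ?_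
      (tendsto_natCast_atTop_atTop.atTop_div_const (by norm_num))
    filter_upwards [eventually_ge_atTop 1] with n hn using auxW_sq hn
  have h2 := Real.tendsto_sqrt_atTop.comp h
  refine h2.congr fun n => ?_
  simp [Real.sqrt_sq (auxW_nonneg n)]

lemma auxW_ratio (k : ℕ) : Tendsto (fun n => auxW n / auxW (n + k)) atTop (𝓝 1) := by
  induction k with
  | zero =>
    refine tendsto_const_nhds.congr' ?_
    filter_upwards [eventually_ge_atTop 1] with n hn
    rw [add_zero, div_self (auxW_pos hn).ne']
  | succ k ih =>
    have h1 : Tendsto (fun n => auxW n / auxW (n + 1)) atTop (𝓝 1) := by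
      have h0 : Tendsto (fun n : ℕ => 1 - (1 : ℝ) / (2 * n + 1)) atTop (𝓝 (1 - 0)) := by
        refine tendsto_const_nhds.sub ?_
        refine tendsto_const_nhds.div_atTop ?_
        exact tendsto_atTop_add_const_right _ _
          (tendsto_natCast_atTop_atTop.const_mul_atTop (by norm_num))
      rw [sub_zero] at h0
      refine h0.congr' ?_
      filter_upwards [eventually_ge_atTop 1] with n hn
      have := auxW_succ n
      have := auxW_pos (show 1 ≤ n + 1 by omega)
      field_simp
      linarith
    have h2 := ih.mul (h1.comp (tendsto_add_atTop_nat k))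
    rw [mul_one] at h2
    refine h2.congr' ?_
    filter_upwards [eventually_ge_atTop 1] with n hn
    have := auxW_pos (show 1 ≤ n + k by omega)
    have := auxW_pos (show 1 ≤ n + k + 1 by omega)
    simp only [Function.comp, ← add_assoc]
    field_simp

lemma auxW_ratio' (k : ℕ) : Tendsto (fun n => auxW (n - k) / auxW n) atTop (𝓝 1) := by
  refine ((auxW_ratio k).comp (tendsto_sub_atTop_nat k)).congr' ?_
  filter_upwards [eventually_ge_atTop k] with n hn
  simp [Nat.sub_add_cancel hn]

noncomputable def auxF (p : ℝ) (N k : ℕ) : ℝ :=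
  if k < N then auxA p k * ((1 / 4 + auxW (N - k) / 2) / auxW N) else 0

lemma auxF_sum (p : ℝ) {N : ℕ} (hN : 1 ≤ N) : dyckCostES p N / (N : ℝ) = ∑' k, auxF p N k := by
  rw [tsum_eq_sum (s := Finset.range N)
    (fun k hk => by simp only [Finset.mem_range] at hk; simp [auxF, hk])]
  unfold dyckCostES
  rw [Finset.mul_sum, Finset.sum_div]
  refine Finset.sum_congr rfl fun k hk => ?_
  rw [Finset.mem_range] at hk
  rw [auxF, if_pos hk]
  obtain ⟨m, rfl⟩ : ∃ m, N = k + 1 + m := ⟨N - k - 1, by omega⟩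
  have e1 : k + 1 + m - k = m + 1 := by omega
  have e2 : k + 1 + m - k - 1 = m := by omega
  unfold dyckEdgeCount auxA auxW
  rw [e2, e1]
  have : 0 < (2 * (k + 1 + m)).choose (k + 1 + m) := Nat.choose_pos (by omega)
  have : (0 : ℝ) < ((2 * (k + 1 + m)).choose (k + 1 + m) : ℝ) := by exact_mod_cast this
  have : (0 : ℝ) < ((k + 1 + m : ℕ) : ℝ) := by positivity
  have hc : ((k + 1 + m : ℕ) : ℝ) - (k : ℝ) = ((m + 1 : ℕ) : ℝ) := by push_cast; ring
  rw [hc]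
  generalize ((k + 1 + m : ℕ) : ℝ) = M at *
  generalize ((m + 1 : ℕ) : ℝ) = L at *
  rw [pow_add, pow_add, pow_succ]
  field_simp
  ring

theorem dyckCostES_leading_low_p (p : ℝ) (hp0 : 0 < p) (hp1 : p < 1 / 2) :
    Filter.Tendsto
      (fun N : ℕ => dyckCostES p N / (N : ℝ))
      Filter.atTop
      (nhds (Real.Gamma (1 / 2 - p) * Real.Gamma (p + 1) /
        ((2 : ℝ) ^ p * Real.sqrt Real.pi * Real.Gamma (2 - p)))) := by
  have hS := auxA_hasSum hp0 hp1
  have hT : Tendsto (fun N => ∑' k, auxF p N k) atTop (𝓝 (∑' k, auxA p k * (1 / 2))) := by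
    refine tendsto_tsum_of_dominated_convergence hS.summable ?_ ?_
    · intro k
      have h1 : Tendsto (fun N => (1 / 4 : ℝ) / auxW N) atTop (𝓝 0) :=
        tendsto_const_nhds.div_atTop auxW_tendsto
      have h2 := (h1.add ((auxW_ratio' k).div_const 2)).const_mul (auxA p k)
      rw [zero_add] at h2
      refine h2.congr' ?_
      filter_upwards [eventually_gt_atTop k] with N hN
      rw [auxF, if_pos hN]
      ring
    · refine Eventually.of_forall fun N k => ?_
      unfold auxF
      split_ifs with hk
      · have hw := auxW_pos (show 1 ≤ N by omega)
        have h1 : 1 / 2 ≤ auxW (N - k) := auxW_one ▸ auxW_mono (show 1 ≤ N - k by omega)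
        have h2 : auxW (N - k) ≤ auxW N := auxW_mono (by omega)
        have hA := auxA_nonneg hp0 k
        have h3 := auxW_nonneg (N - k)
        rw [Real.norm_of_nonneg (by positivity)]
        refine mul_le_of_le_one_right hA ?_
        rw [div_le_one hw]
        linarith
      · simpa using auxA_nonneg hp0 k
  have hE := (hS.mul_right (1 / 2)).tsum_eq
  rw [hE] at hT
  have hT2 := hT.congr' (f₂ := fun N : ℕ => dyckCostES p N / (N : ℝ)) (by
    filter_upwards [eventually_ge_atTop 1] with N hN using (auxF_sum p hN).symm)
  convert hT2 using 2
  ring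
end

section
/- Let 1/2 < p < 1 be real. Define, for N ≥ 1, E_N(p) = B_N^{−1} · Σ_{k=0}^{N−1} v_{N,k} · (2k+1)^p, where B_N = binom(2N,N), C_k = binom(2k,k)/(k+1), and v_{N,k} = C_k · (4^{N−k−1} + ((N−k)/2) · B_{N−k}). Then the limit as N → ∞ of E_N(p) / N^{1/2 + p} equals 2^p · Γ(p − 1/2) / (4 · Γ(p+1)), the same universal constant as in the exponential-spacings model. -/
/-- Average cost of the Dyck matching in the uniform-spacings model. -/
noncomputable def dyckCostUS (p : ℝ) (N : ℕ) : ℝ :=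
  ((Nat.choose (2 * N) N : ℝ))⁻¹ *
    ∑ k ∈ Finset.range N,
      dyckEdgeCount N k * (2 * (k : ℝ) + 1) ^ p

open Filter Topology MeasureTheory in
lemma aux_beta (a : ℝ) (ha : 0 < a) :
    ∫ x in (0:ℝ)..1, x ^ (a - 1) * (1 - x) ^ ((1:ℝ)/2) =
      Real.Gamma a * Real.Gamma (3/2) / Real.Gamma (a + 3/2) := by
  have h := ProbabilityTheory.beta_eq_betaIntegralReal a (3/2) ha (by norm_num)
  rw [ProbabilityTheory.beta] at h
  rw [h, Complex.betaIntegral]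
  have : ∫ x in (0:ℝ)..1, (x:ℂ) ^ ((a:ℂ) - 1) * (1 - (x:ℂ)) ^ (((3/2:ℝ):ℂ) - 1)
      = ∫ x in (0:ℝ)..1, ((x ^ (a - 1) * (1 - x) ^ ((1:ℝ)/2) : ℝ) : ℂ) := by
    apply intervalIntegral.integral_congr
    intro x hx
    rw [Set.uIcc_of_le zero_le_one] at hx
    simp only
    rw [Complex.ofReal_mul, Complex.ofReal_cpow hx.1, Complex.ofReal_cpow (by linarith [hx.2])]
    congr 2
    · push_cast; ring
    · push_cast; ring
    · push_cast; ring
  rw [this, intervalIntegral.integral_ofReal, Complex.ofReal_re]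

open Filter Topology MeasureTheory in
lemma aux_floor_sum (g : ℕ → ℝ) (N : ℕ) (hN : 0 < N) :
    ∫ x in (0:ℝ)..1, g ⌊(N:ℝ) * x⌋₊ = (N:ℝ)⁻¹ * ∑ k ∈ Finset.range N, g k := by
  have hN' : (N:ℝ) ≠ 0 := by positivity
  have h := intervalIntegral.integral_comp_mul_left (a := 0) (b := 1)
    (fun y : ℝ => g ⌊y⌋₊) hN'
  simp only [mul_zero, mul_one, smul_eq_mul] at h
  rw [h]
  congr 1
  have hfl : ∀ k : ℕ, ∀ᵐ x : ℝ, x ∈ Set.uIoc (k:ℝ) ((k+1:ℕ):ℝ) → g k = g ⌊x⌋₊ := by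
    intro k
    have : ∀ᵐ x : ℝ, x ≠ ((k+1:ℕ):ℝ) := Measure.ae_ne _ _
    filter_upwards [this] with x hx hx2
    rw [Set.uIoc_of_le (by push_cast; linarith)] at hx2
    have : ⌊x⌋₊ = k := by
      rw [Nat.floor_eq_iff (le_trans (by positivity) hx2.1.le)]
      refine ⟨hx2.1.le, ?_⟩
      have := lt_of_le_of_ne hx2.2 hx
      push_cast at this
      exact this
    rw [this]
  have h2 := intervalIntegral.sum_integral_adjacent_intervals (f := fun y : ℝ => g ⌊y⌋₊)
    (μ := volume) (a := fun k : ℕ => (k:ℝ)) (n := N) (by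
      intro k _
      refine (intervalIntegrable_const (c := g k)).congr_ae ?_
      rw [EventuallyEq, ae_restrict_iff' measurableSet_uIoc]
      exact hfl k)
  simp only [Nat.cast_zero] at h2
  rw [← h2]
  apply Finset.sum_congr rfl
  intro k _
  rw [← intervalIntegral.integral_congr_ae (hfl k)]
  simp

open Filter Topology MeasureTheory in
lemma aux_bdd (u : ℕ → ℝ) (A : ℝ) (hu : Tendsto u atTop (𝓝 A)) : ∃ C, 0 ≤ C ∧ ∀ n, |u n| ≤ C := by
  obtain ⟨C, hC⟩ := (Metric.isBounded_range_of_tendsto u hu).exists_norm_le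
  exact ⟨C, (norm_nonneg _).trans (hC (u 0) ⟨0, rfl⟩), fun n => hC _ ⟨n, rfl⟩⟩

open Filter Topology MeasureTheory in
lemma aux_conv (a : ℝ) (ha : 0 < a) (ha1 : a < 1) (u w : ℕ → ℝ) (A W : ℝ)
    (hu : Tendsto u atTop (𝓝 A)) (hw : Tendsto w atTop (𝓝 W)) :
    Tendsto (fun N : ℕ => (N:ℝ)⁻¹ * ∑ k ∈ Finset.range N,
      (u k * w (N - k) * (((k:ℝ)+1)/N) ^ (a - 1) * (((N - k : ℕ):ℝ)/N) ^ ((1:ℝ)/2))) atTop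
      (𝓝 (A * W * (Real.Gamma a * Real.Gamma (3/2) / Real.Gamma (a + 3/2)))) := by
  obtain ⟨C, hC0, hC⟩ := aux_bdd u A hu
  obtain ⟨D, hD0, hD⟩ := aux_bdd w W hw
  rw [← aux_beta a ha, ← intervalIntegral.integral_const_mul]
  have key : Tendsto (fun N : ℕ => ∫ x in (0:ℝ)..1,
      (fun k : ℕ => (u k * w (N - k) * (((k:ℝ)+1)/N) ^ (a - 1) *
        (((N - k : ℕ):ℝ)/N) ^ ((1:ℝ)/2))) ⌊(N:ℝ) * x⌋₊) atTop
      (𝓝 (∫ x in (0:ℝ)..1, A * W * (x ^ (a - 1) * (1 - x) ^ ((1:ℝ)/2)))) := by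
    apply intervalIntegral.tendsto_integral_filter_of_dominated_convergence
      (fun x => C * D * x ^ (a - 1))
    · refine Eventually.of_forall fun N => ?_
      apply Measurable.aestronglyMeasurable
      exact (measurable_from_nat (f := fun k : ℕ => (u k * w (N - k) * (((k:ℝ)+1)/N) ^ (a - 1) *
        (((N - k : ℕ):ℝ)/N) ^ ((1:ℝ)/2)))).comp (Nat.measurable_floor.comp (measurable_const_mul _))
    · filter_upwards [eventually_gt_atTop 0] with N hN
      refine Eventually.of_forall fun x hx => ?_
      rw [Set.uIoc_of_le zero_le_one] at hx
      have hN' : (0:ℝ) < N := by exact_mod_cast hN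
      set k := ⌊(N:ℝ) * x⌋₊
      have hk : (N:ℝ) * x ≤ k + 1 := (Nat.lt_floor_add_one _).le
      have h1 : (((k:ℝ)+1)/N) ^ (a - 1) ≤ x ^ (a - 1) := by
        apply Real.rpow_le_rpow_of_nonpos hx.1 _ (by linarith)
        rw [le_div_iff₀ hN']; linarith
      have h2 : (((N - k : ℕ):ℝ)/N) ^ ((1:ℝ)/2) ≤ 1 := by
        apply Real.rpow_le_one (by positivity) _ (by norm_num)
        rw [div_le_one hN']
        exact_mod_cast Nat.sub_le _ _
      rw [Real.norm_eq_abs, abs_mul, abs_mul, abs_mul,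
        abs_of_nonneg (show 0 ≤ (((k:ℝ)+1)/N) ^ (a - 1) by positivity),
        abs_of_nonneg (show 0 ≤ (((N - k : ℕ):ℝ)/N) ^ ((1:ℝ)/2) by positivity)]
      calc _ ≤ C * D * x ^ (a-1) * 1 := by
            gcongr
            · exact mul_nonneg (mul_nonneg hC0 hD0) (Real.rpow_nonneg hx.1.le _)
            · exact hC _
            · exact hD _
        _ = _ := mul_one _
    · exact (intervalIntegral.intervalIntegrable_rpow' (by linarith)).const_mul _
    · have : ∀ᵐ x : ℝ, x ≠ 1 := Measure.ae_ne _ _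
      filter_upwards [this] with x hx1 hx
      rw [Set.uIoc_of_le zero_le_one] at hx
      have hx1 : x < 1 := lt_of_le_of_ne hx.2 hx1
      have hx0 := hx.1
      have hcast : Tendsto (fun N : ℕ => (N:ℝ)) atTop atTop := tendsto_natCast_atTop_atTop
      have hfl : Tendsto (fun N : ℕ => ⌊(N:ℝ) * x⌋₊) atTop atTop :=
        tendsto_nat_floor_atTop.comp (hcast.atTop_mul_const hx0)
      have hle : ∀ N : ℕ, ⌊(N:ℝ) * x⌋₊ ≤ N := by
        intro N
        apply Nat.floor_le_of_le
        nlinarith [(Nat.cast_nonneg N : (0:ℝ) ≤ N)]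
      have hsub : Tendsto (fun N : ℕ => N - ⌊(N:ℝ) * x⌋₊) atTop atTop := by
        rw [← tendsto_natCast_atTop_iff (R := ℝ)]
        refine tendsto_atTop_mono ?_ (hcast.atTop_mul_const (sub_pos.2 hx1))
        intro N
        rw [Nat.cast_sub (hle N)]
        have := Nat.floor_le (show 0 ≤ (N:ℝ) * x by positivity)
        linarith
      have hdiv : Tendsto (fun N : ℕ => (⌊(N:ℝ) * x⌋₊ : ℝ) / N) atTop (𝓝 x) := by
        have := (tendsto_nat_floor_mul_div_atTop (R := ℝ) hx0.le).comp hcast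
        refine this.congr fun N => ?_
        simp [mul_comm]
      have hone : Tendsto (fun N : ℕ => (1:ℝ) / N) atTop (𝓝 0) := tendsto_one_div_atTop_nhds_zero_nat
      have hd1 : Tendsto (fun N : ℕ => ((⌊(N:ℝ) * x⌋₊ : ℝ) + 1) / N) atTop (𝓝 x) := by
        have := hdiv.add hone
        rw [add_zero] at this
        refine this.congr fun N => ?_
        rw [add_div]
      have hd2 : Tendsto (fun N : ℕ => ((N - ⌊(N:ℝ) * x⌋₊ : ℕ) : ℝ) / N) atTop (𝓝 (1 - x)) := by
        refine (hdiv.const_sub 1).congr' ?_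
        filter_upwards [eventually_gt_atTop 0] with N hN
        rw [Nat.cast_sub (hle N), sub_div, div_self (by positivity)]
      have := (((hu.comp hfl).mul (hw.comp hsub)).mul
        (hd1.rpow_const (p := a - 1) (Or.inl hx0.ne'))).mul
        (hd2.rpow_const (p := (1:ℝ)/2) (Or.inr (by norm_num)))
      rw [← mul_assoc]
      exact this
  refine key.congr' ?_
  filter_upwards [eventually_gt_atTop 0] with N hN
  exact aux_floor_sum (fun k : ℕ => (u k * w (N - k) * (((k:ℝ)+1)/N) ^ (a - 1) *
        (((N - k : ℕ):ℝ)/N) ^ ((1:ℝ)/2))) N hN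

open Filter Topology in
lemma aux_cb : Tendsto (fun n : ℕ => ((2*n).choose n : ℝ) / 4 ^ n * √n) atTop (𝓝 (1 / √Real.pi)) := by
  have h1 := Stirling.tendsto_stirlingSeq_sqrt_pi
  have h2 : Tendsto (fun n : ℕ => Stirling.stirlingSeq (2 * n)) atTop (𝓝 (√Real.pi)) :=
    h1.comp (tendsto_id.const_mul_atTop' (by norm_num))
  have hpi : √Real.pi ≠ 0 := by positivity
  have h3 := h2.div (h1.pow 2) (by positivity)
  rw [show √Real.pi / √Real.pi ^ 2 = 1 / √Real.pi by field_simp] at h3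
  refine h3.congr' ?_
  filter_upwards [eventually_gt_atTop 0] with n hn
  have hn' : (0:ℝ) < n := by exact_mod_cast hn
  have hc : ((2*n).choose n : ℝ) = ((2*n).factorial : ℝ) / (n.factorial)^2 := by
    rw [Nat.cast_choose ℝ (by omega : n ≤ 2 * n), show 2 * n - n = n by omega, sq]
  simp only [Pi.div_apply, Stirling.stirlingSeq]
  rw [hc]
  push_cast
  rw [show (2:ℝ) * (2 * n) = 2^2 * n by ring, Real.sqrt_mul (by positivity), Real.sqrt_sq (by norm_num)]
  rw [mul_div_assoc 2 (n:ℝ), mul_pow 2 ((n:ℝ)/_), pow_mul 2 2 n]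
  have e1 : √(2 * (n:ℝ)) ^ 2 = 2 * n := Real.sq_sqrt (by positivity)
  have e2 : √(n:ℝ) ^ 2 = n := Real.sq_sqrt (by positivity)
  have hs : 0 < √(n:ℝ) := by positivity
  have hE : 0 < ((n:ℝ) / Real.exp 1) ^ n := by positivity
  have hf : (0:ℝ) < n.factorial := by positivity
  rw [div_pow _ (√(2 * (n:ℝ)) * _), mul_pow (√(2 * (n:ℝ))), e1, pow_mul' ((n:ℝ)/_) 2 n]
  set E := ((n:ℝ) / Real.exp 1) ^ n
  norm_num
  field_simp
  rw [e2]

open Filter Topology in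
lemma aux_w : Tendsto (fun n : ℕ => (1/4 + (n:ℝ)/2 * (((2*n).choose n : ℝ) / 4 ^ n)) / √n) atTop
    (𝓝 (1 / (2 * √Real.pi))) := by
  have h1 := aux_cb.div_const 2
  have h2 : Tendsto (fun n : ℕ => (1/4:ℝ) / √n) atTop (𝓝 0) :=
    (Real.tendsto_sqrt_atTop.comp tendsto_natCast_atTop_atTop).const_div_atTop _
  have := h2.add h1
  rw [show 0 + 1 / √Real.pi / 2 = 1 / (2 * √Real.pi) by ring] at this
  refine this.congr' ?_
  filter_upwards [eventually_gt_atTop 0] with n hn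
  have hs : 0 < √(n:ℝ) := by positivity
  have e2 : √(n:ℝ) ^ 2 = n := Real.sq_sqrt (by positivity)
  field_simp
  rw [e2]; ring

open Filter Topology in
lemma aux_u (p : ℝ) : Tendsto (fun n : ℕ => ((catalan n : ℝ) / 4 ^ n * (2 * (n:ℝ) + 1) ^ p) *
    ((n:ℝ) + 1) ^ (3/2 - p)) atTop (𝓝 (2 ^ p / √Real.pi)) := by
  have hone : Tendsto (fun N : ℕ => (1:ℝ) / N) atTop (𝓝 0) := tendsto_one_div_atTop_nhds_zero_nat
  have a1 : Tendsto (fun n : ℕ => (2 + (1:ℝ) / n) ^ p) atTop (𝓝 (2 ^ p)) := by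
    have := (hone.const_add 2).rpow_const (p := p) (Or.inl (by norm_num))
    simpa using this
  have a2 : Tendsto (fun n : ℕ => (1 + (1:ℝ) / n) ^ (1/2 - p)) atTop (𝓝 1) := by
    have := (hone.const_add 1).rpow_const (p := 1/2 - p) (Or.inl (by norm_num))
    simpa using this
  have := (aux_cb.mul a1).mul a2
  rw [show 1 / √Real.pi * 2 ^ p * 1 = 2 ^ p / √Real.pi by ring] at this
  refine this.congr' ?_
  filter_upwards [eventually_gt_atTop 0] with n hn
  have hn' : (0:ℝ) < n := by exact_mod_cast hn
  have hcat : (((2*n).choose n : ℕ) : ℝ) = ((n:ℝ) + 1) * catalan n := by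
    have := succ_mul_catalan_eq_centralBinom n
    rw [Nat.centralBinom] at this
    exact_mod_cast this.symm
  rw [hcat, show (2:ℝ) + 1 / n = (2 * n + 1) / n by field_simp,
    show (1:ℝ) + 1 / n = (n + 1) / n by field_simp,
    Real.div_rpow (by positivity) hn'.le, Real.div_rpow (by positivity) hn'.le,
    show (3:ℝ)/2 - p = (1/2 - p) + 1 by ring, Real.rpow_add_one (by positivity),
    Real.sqrt_eq_rpow, Real.rpow_sub hn']
  have := Real.rpow_pos_of_pos hn' p
  have := Real.rpow_pos_of_pos hn' (1/2)
  field_simp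

theorem dyckCostUS_leading_high_p (p : ℝ) (hp0 : 1 / 2 < p) (hp1 : p < 1) :
    Filter.Tendsto
      (fun N : ℕ => dyckCostUS p N / (N : ℝ) ^ (1 / 2 + p))
      Filter.atTop
      (nhds ((2 : ℝ) ^ p * Real.Gamma (p - 1 / 2) / (4 * Real.Gamma (p + 1)))) := by
  have h1 := aux_conv (p - 1/2) (by linarith) (by linarith) _ _ _ _ (aux_u p) aux_w
  have hpi : 0 < √Real.pi := by positivity
  have h2 := aux_cb.inv₀ (by positivity)
  have h3 := h2.mul h1
  have hG : Real.Gamma (3/2) = √Real.pi / 2 := by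
    rw [show (3:ℝ)/2 = 1/2 + 1 by norm_num, Real.Gamma_add_one (by norm_num),
      Real.Gamma_one_half_eq]; ring
  have hlim : (1 / √Real.pi)⁻¹ * (2 ^ p / √Real.pi * (1 / (2 * √Real.pi)) *
      (Real.Gamma (p - 1/2) * Real.Gamma (3/2) / Real.Gamma (p - 1/2 + 3/2))) =
      (2 : ℝ) ^ p * Real.Gamma (p - 1 / 2) / (4 * Real.Gamma (p + 1)) := by
    rw [hG, show p - 1/2 + 3/2 = p + 1 by ring]
    have := Real.Gamma_pos_of_pos (show 0 < p + 1 by linarith)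
    field_simp
    ring
  rw [hlim] at h3
  refine h3.congr' ?_
  filter_upwards [Filter.eventually_gt_atTop 0] with N hN
  have hN' : (0:ℝ) < N := by exact_mod_cast hN
  have hB : (0:ℝ) < (2*N).choose N := by exact_mod_cast Nat.choose_pos (by omega)
  rw [dyckCostUS, mul_div_assoc, Finset.sum_div, Finset.mul_sum, Finset.mul_sum, Finset.mul_sum]
  apply Finset.sum_congr rfl
  intro k hk
  have hk : k < N := Finset.mem_range.1 hk
  have hj : (0:ℝ) < ((N - k : ℕ) : ℝ) := by exact_mod_cast Nat.sub_pos_of_lt hk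
  rw [dyckEdgeCount, ← Nat.cast_sub hk.le]
  have h4 : (4:ℝ) ^ (N - k - 1) = 4 ^ (N - k) / 4 := by
    rw [eq_div_iff (by norm_num), ← pow_succ]; congr 1; omega
  have h5 : (4:ℝ) ^ N = 4 ^ (N - k) * 4 ^ k := by
    rw [← pow_add]; congr 1; omega
  rw [h4, h5, Real.div_rpow (by positivity) hN'.le, Real.div_rpow (by positivity) hN'.le,
    Real.sqrt_eq_rpow, Real.sqrt_eq_rpow]
  set j := N - k
  have e1 : ((k:ℝ) + 1) ^ (3/2 - p) * ((k:ℝ) + 1) ^ (p - 1/2 - 1) = 1 := by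
    rw [← Real.rpow_add (by positivity)]
    ring_nf
    exact Real.rpow_zero _
  have e2 : (N:ℝ) ^ (1/2 + p) = N ^ (1/2:ℝ) * N ^ (p - 1/2 - 1) * N ^ (1/2:ℝ) * N := by
    rw [← Real.rpow_add hN', ← Real.rpow_add hN', ← Real.rpow_add_one hN'.ne']
    congr 1; ring
  rw [e2]
  have p1 := Real.rpow_pos_of_pos hN' (1/2)
  have p2 := Real.rpow_pos_of_pos hN' (p - 1/2 - 1)
  have p3 := Real.rpow_pos_of_pos hj (1/2)
  generalize (N:ℝ) ^ (1/2:ℝ) = X at *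
  generalize (N:ℝ) ^ (p - 1/2 - 1) = Y at *
  generalize (j:ℝ) ^ (1/2:ℝ) = Z at *
  have e3 : ((k:ℝ) + 1) ^ (p - 1/2 - 1) = (((k:ℝ) + 1) ^ (3/2 - p))⁻¹ :=
    eq_inv_of_mul_eq_one_right e1
  rw [e3]
  have p4 : 0 < ((k:ℝ) + 1) ^ (3/2 - p) := by positivity
  generalize ((k:ℝ) + 1) ^ (3/2 - p) = U at *
  generalize (2 * (k:ℝ) + 1) ^ p = V at *
  field_simp
  try ring
end

section
/- Define, for N ≥ 2, E_N = B_N^{−1} · Σ_{k=0}^{N−1} v_{N,k} · (2k+1)^{1/2}, where B_N = binom(2N,N), C_k = binom(2k,k)/(k+1), and v_{N,k} = C_k · (4^{N−k−1} + ((N−k)/2) · B_{N−k}). Then the limit as N → ∞ of E_N / (N · log N) equals 1/√(2π). -/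
/-- Average cost of the Dyck matching in the uniform-spacings model at `p = 1/2`. -/
noncomputable def dyckCostUShalf (N : ℕ) : ℝ :=
  ((Nat.choose (2 * N) N : ℝ))⁻¹ *
    ∑ k ∈ Finset.range N,
      dyckEdgeCount N k * (2 * (k : ℝ) + 1) ^ ((1 : ℝ) / 2)

namespace DyckHalf
open Filter Topology Finset

noncomputable def b (n : ℕ) : ℝ := (Nat.centralBinom n : ℝ) / 4 ^ n
noncomputable def u (n : ℕ) : ℝ := 1 / √(Real.Wallis.W n)
noncomputable def w (n : ℕ) : ℝ := 1 / 4 + (n : ℝ) / 2 * b n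

lemma b_pos (n : ℕ) : 0 < b n := by
  unfold b
  have := Nat.centralBinom_pos n
  positivity

lemma b_sq (n : ℕ) : b n ^ 2 * (2 * n + 1) * Real.Wallis.W n = 1 := by
  rw [Real.Wallis.W_eq_factorial_ratio]
  have h := Nat.choose_mul_factorial_mul_factorial (show n ≤ 2 * n by omega)
  rw [show 2 * n - n = n by omega, ← Nat.centralBinom_eq_two_mul_choose] at h
  have h' : (Nat.centralBinom n : ℝ) * (n.factorial : ℝ) * n.factorial = (2 * n).factorial := by
    exact_mod_cast h
  unfold b
  rw [← h']
  have h1 : (Nat.centralBinom n : ℝ) ≠ 0 := by exact_mod_cast Nat.centralBinom_ne_zero n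
  have h2 : (n.factorial : ℝ) ≠ 0 := by exact_mod_cast Nat.factorial_ne_zero n
  have h3 : (2 * (n : ℝ) + 1) ≠ 0 := by positivity
  have h4 : (2 : ℝ) ^ (4 * n) = (4 ^ n) ^ 2 := by
    rw [← pow_mul, show (4 : ℝ) = 2 ^ 2 by norm_num, ← pow_mul]; congr 1; ring
  rw [h4]
  field_simp

lemma b_eq (n : ℕ) : b n * √(2 * n + 1) = u n := by
  have hW := Real.Wallis.W_pos n
  have h : 0 ≤ b n := (b_pos n).le
  unfold u
  rw [eq_div_iff (by positivity)]
  have h1 : b n * √(2 * n + 1) * √(Real.Wallis.W n) = √(b n ^ 2 * (2 * n + 1) * Real.Wallis.W n) := by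
    rw [Real.sqrt_mul (by positivity), Real.sqrt_mul (by positivity), Real.sqrt_sq h]
  rw [h1, b_sq, Real.sqrt_one]

lemma u_tendsto : Tendsto u atTop (𝓝 (1 / √(Real.pi / 2))) := by
  unfold u
  refine Tendsto.div tendsto_const_nhds ?_ ?_
  · exact (Real.continuous_sqrt.tendsto _).comp Real.Wallis.tendsto_W_nhds_pi_div_two
  · have := Real.pi_pos
    positivity

lemma u_nonneg (n : ℕ) : 0 ≤ u n := by unfold u; positivity

lemma b_succ (n : ℕ) : (n + 1 : ℝ) * b (n + 1) = (n + 1 / 2) * b n := by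
  have h := Nat.succ_mul_centralBinom_succ n
  have h' : ((n : ℝ) + 1) * (Nat.centralBinom (n + 1) : ℝ) = 2 * (2 * n + 1) * Nat.centralBinom n := by
    exact_mod_cast h
  unfold b
  rw [pow_succ]
  field_simp
  linarith

lemma b_anti : Antitone b := by
  refine antitone_nat_of_succ_le fun n => ?_
  have h := b_succ n
  have := b_pos n
  have h2 : (n + 1 : ℝ) * b (n + 1) ≤ (n + 1) * b n := by rw [h]; nlinarith
  exact le_of_mul_le_mul_left h2 (by positivity)

lemma w_mono : Monotone w := by
  refine monotone_nat_of_le_succ fun n => ?_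
  have h := b_succ n
  have := b_pos n
  unfold w
  push_cast
  nlinarith

lemma w_pos (n : ℕ) : 0 < w n := by
  have := b_pos n
  unfold w
  positivity

lemma w_lower (N k : ℕ) (h : k < N) : w N * (1 - k / N) ≤ w (N - k) := by
  have hN : (0 : ℝ) < N := by exact_mod_cast (by omega : 0 < N)
  have h1 : b N ≤ b (N - k) := b_anti (Nat.sub_le _ _)
  have hk : (0 : ℝ) ≤ (N : ℝ) - k := by
    have : (k : ℝ) < N := by exact_mod_cast h
    linarith
  have h0 : (0 : ℝ) ≤ (k : ℝ) / N := by positivity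
  unfold w
  rw [Nat.cast_sub h.le]
  have e : (1 / 4 + (N : ℝ) / 2 * b N) * (1 - k / N)
      = 1 / 4 - 1 / 4 * (k / N) + ((N : ℝ) - k) / 2 * b N := by
    field_simp
  rw [e]
  have := mul_le_mul_of_nonneg_left h1 (by positivity : 0 ≤ ((N : ℝ) - k) / 2)
  linarith

noncomputable def A (N : ℕ) : ℝ := ∑ k ∈ range N, u k / (k + 1)
noncomputable def S (N : ℕ) : ℝ := ∑ k ∈ range N, u k / (k + 1) * w (N - k)

lemma cost_eq (N : ℕ) : dyckCostUShalf N = S N / b N := by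
  unfold dyckCostUShalf S
  rw [div_eq_inv_mul _ (b N)]
  have hb : ((Nat.choose (2 * N) N : ℝ)) = b N * 4 ^ N := by
    unfold b
    rw [Nat.centralBinom_eq_two_mul_choose]
    field_simp
  rw [hb, mul_inv, mul_assoc]
  congr 1
  rw [Finset.mul_sum]
  refine Finset.sum_congr rfl fun k hk => ?_
  have hk' : k < N := Finset.mem_range.1 hk
  obtain ⟨m, rfl⟩ : ∃ m, N = k + m + 1 := ⟨N - k - 1, by omega⟩
  have e1 : k + m + 1 - k = m + 1 := by omega
  have hc : ((k : ℝ) + 1) * (catalan k : ℝ) = b k * 4 ^ k := by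
    have := succ_mul_catalan_eq_centralBinom k
    unfold b
    rw [← this]
    push_cast
    field_simp
  have hc' : (catalan k : ℝ) = b k * 4 ^ k / (k + 1) := by
    field_simp
    linarith
  have hm : ((Nat.choose (2 * (m + 1)) (m + 1) : ℝ)) = b (m + 1) * 4 ^ (m + 1) := by
    unfold b
    rw [Nat.centralBinom_eq_two_mul_choose]
    field_simp
  unfold dyckEdgeCount
  rw [e1, hm, hc', ← Real.sqrt_eq_rpow, ← b_eq]
  unfold w
  rw [show m + 1 - 1 = m by omega, show k + m + 1 = k + (m + 1) by omega, pow_add, pow_succ]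
  push_cast
  field_simp
  ring

lemma u_bdd : ∃ C, ∀ n, u n ≤ C := by
  obtain ⟨C, hC⟩ := u_tendsto.bddAbove_range
  exact ⟨C, fun n => hC ⟨n, rfl⟩⟩

lemma S_le (N : ℕ) : S N ≤ A N * w N := by
  unfold S A
  rw [Finset.sum_mul]
  refine Finset.sum_le_sum fun k _ => ?_
  exact mul_le_mul_of_nonneg_left (w_mono (Nat.sub_le _ _)) (div_nonneg (u_nonneg k) (by positivity))

lemma le_S (C : ℝ) (hC : ∀ n, u n ≤ C) (N : ℕ) (hN : 0 < N) : (A N - C) * w N ≤ S N := by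
  have hN' : (0 : ℝ) < N := by exact_mod_cast hN
  have h1 : ∑ k ∈ range N, u k / (k + 1) * (w N * (1 - k / N)) ≤ S N := by
    unfold S
    refine Finset.sum_le_sum fun k hk => ?_
    exact mul_le_mul_of_nonneg_left (w_lower N k (Finset.mem_range.1 hk))
      (div_nonneg (u_nonneg k) (by positivity))
  refine le_trans ?_ h1
  have h2 : A N - C ≤ ∑ k ∈ range N, u k / (k + 1) * (1 - k / N) := by
    have : C = ∑ k ∈ range N, C / N := by
      simp
      field_simp
    unfold A
    rw [this, ← Finset.sum_sub_distrib]
    refine Finset.sum_le_sum fun k hk => ?_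
    have e : u k / (k + 1) * (k / N) ≤ C / N := by
      have : u k / (k + 1) * (k / N) = (u k * (k / (k + 1))) / N := by ring
      rw [this]
      gcongr
      refine le_trans ?_ (hC k)
      refine mul_le_of_le_one_right (u_nonneg k) ?_
      rw [div_le_one (by positivity)]
      linarith
    linarith
  calc (A N - C) * w N ≤ (∑ k ∈ range N, u k / (k + 1) * (1 - k / N)) * w N :=
        mul_le_mul_of_nonneg_right h2 (w_pos N).le
    _ = _ := by
        rw [Finset.sum_mul]
        exact Finset.sum_congr rfl fun k _ => by ring

lemma log_top : Tendsto (fun N : ℕ => Real.log N) atTop atTop :=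
  Real.tendsto_log_atTop.comp tendsto_natCast_atTop_atTop

lemma harm_div : Tendsto (fun N : ℕ => (∑ k ∈ range N, 1 / ((k : ℝ) + 1)) / Real.log N) atTop (𝓝 1) := by
  have h := Real.tendsto_harmonic_sub_log
  have h2 := (h.div_atTop log_top).add_const 1
  rw [zero_add] at h2
  refine h2.congr' ?_
  filter_upwards [log_top.eventually_gt_atTop 0] with N hN
  have : ((harmonic N : ℚ) : ℝ) = ∑ k ∈ range N, 1 / ((k : ℝ) + 1) := by
    unfold harmonic
    push_cast
    simp
  rw [this]
  field_simp
  ring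

lemma harm_top : Tendsto (fun N : ℕ => ∑ k ∈ range N, 1 / ((k : ℝ) + 1)) atTop atTop :=
  Real.tendsto_sum_range_one_div_nat_succ_atTop

lemma A_div : Tendsto (fun N : ℕ => A N / Real.log N) atTop (𝓝 (1 / √(Real.pi / 2))) := by
  set c := 1 / √(Real.pi / 2) with hc
  have h1 : (fun k : ℕ => (u k - c) * (1 / ((k : ℝ) + 1))) =o[atTop] (fun k : ℕ => 1 / ((k : ℝ) + 1)) := by
    have h0 : (fun k : ℕ => u k - c) =o[atTop] (fun _ => (1 : ℝ)) := by
      rw [Asymptotics.isLittleO_one_iff]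
      have := u_tendsto.sub_const c
      rwa [← hc, sub_self] at this
    simpa using h0.mul_isBigO (Asymptotics.isBigO_refl (fun k : ℕ => 1 / ((k : ℝ) + 1)) atTop)
  have h2 := (h1.sum_range (fun k => by positivity) harm_top).tendsto_div_nhds_zero
  have h3 := (h2.add_const c).mul harm_div
  rw [zero_add, mul_one] at h3
  refine h3.congr' ?_
  filter_upwards [harm_top.eventually_gt_atTop 0] with N hN
  have e : ∑ k ∈ range N, (u k - c) * (1 / ((k : ℝ) + 1)) = A N - c * ∑ k ∈ range N, 1 / ((k : ℝ) + 1) := by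
    unfold A
    rw [Finset.mul_sum, ← Finset.sum_sub_distrib]
    exact Finset.sum_congr rfl fun k _ => by ring
  rw [e]
  field_simp
  ring

lemma S_div : Tendsto (fun N : ℕ => S N / w N / Real.log N) atTop (𝓝 (1 / √(Real.pi / 2))) := by
  obtain ⟨C, hC⟩ := u_bdd
  have hl : Tendsto (fun N : ℕ => (A N - C) / Real.log N) atTop (𝓝 (1 / √(Real.pi / 2))) := by
    have := A_div.sub ((tendsto_const_nhds (x := C)).div_atTop log_top)
    rw [sub_zero] at this
    exact this.congr fun N => by ring
  refine tendsto_of_tendsto_of_tendsto_of_le_of_le' hl A_div ?_ ?_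
  · filter_upwards [log_top.eventually_gt_atTop 0, eventually_gt_atTop 0] with N h0 hN
    gcongr
    rw [le_div_iff₀ (w_pos N)]
    exact le_S C hC N hN
  · filter_upwards [log_top.eventually_gt_atTop 0] with N h0
    gcongr
    rw [div_le_iff₀ (w_pos N)]
    exact S_le N

lemma w_div : Tendsto (fun N : ℕ => w N / (b N * N)) atTop (𝓝 (1 / 2)) := by
  have hi : Tendsto (fun N : ℕ => 1 / (N : ℝ)) atTop (𝓝 0) := tendsto_one_div_atTop_nhds_zero_nat
  have h1 : Tendsto (fun N : ℕ => √(Real.Wallis.W N * (2 * (1 / (N : ℝ)) + (1 / (N : ℝ)) * (1 / (N : ℝ)))))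
      atTop (𝓝 0) := by
    have := Real.Wallis.tendsto_W_nhds_pi_div_two.mul ((hi.const_mul 2).add (hi.mul hi))
    have := (Real.continuous_sqrt.tendsto _).comp this
    simpa [Function.comp_def] using this
  have h2 := (h1.const_mul (1 / 4)).add_const (1 / 2)
  rw [mul_zero, zero_add] at h2
  refine h2.congr' ?_
  filter_upwards [eventually_gt_atTop 0] with N hN
  have hN' : (0 : ℝ) < N := by exact_mod_cast hN
  have hb := b_pos N
  have e : √(Real.Wallis.W N * (2 * (1 / (N : ℝ)) + (1 / (N : ℝ)) * (1 / (N : ℝ)))) = 1 / (b N * N) := by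
    rw [Real.sqrt_eq_iff_mul_self_eq_of_pos (by positivity)]
    have := b_sq N
    field_simp
    linarith
  rw [e]
  unfold w
  field_simp

end DyckHalf

theorem dyckCostUS_leading_half :
    Filter.Tendsto
      (fun N : ℕ => dyckCostUShalf N / ((N : ℝ) * Real.log N))
      Filter.atTop
      (nhds (1 / Real.sqrt (2 * Real.pi))) := by
  have h := DyckHalf.w_div.mul DyckHalf.S_div
  have e : 1 / 2 * (1 / √(Real.pi / 2)) = 1 / Real.sqrt (2 * Real.pi) := by
    rw [show 2 * Real.pi = 2 ^ 2 * (Real.pi / 2) by ring, Real.sqrt_mul (by positivity),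
      Real.sqrt_sq (by norm_num)]
    field_simp
  rw [e] at h
  refine h.congr fun N => ?_
  rw [DyckHalf.cost_eq]
  have := (DyckHalf.w_pos N).ne'
  field_simp
end

section
/- Let 1/2 < p < 1 be real. Define, for N ≥ 1, E_N(p) = B_N^{−1} · Σ_{k=0}^{N−1} v_{N,k} · Γ(2k+1+p)/(2k)!, where B_N = binom(2N,N), C_k = binom(2k,k)/(k+1), and v_{N,k} = C_k · (4^{N−k−1} + ((N−k)/2) · B_{N−k}). Then the limit as N → ∞ of (E_N(p) − (2^p Γ(p−1/2)/(4 Γ(p+1))) · N^{1/2+p}) / N equals Γ(1/2 − p) · Γ(p+1) / (2^p · √π · Γ(2 − p)). -/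
open Filter Topology Finset

noncomputable def pp (x : ℝ) (n : ℕ) : ℝ := ∏ j ∈ Finset.range n, (x + (j : ℝ))
noncomputable def uu (x : ℝ) (n : ℕ) : ℝ := pp x n / (n.factorial : ℝ)
noncomputable def tt (a b c : ℝ) (k : ℕ) : ℝ := pp a k * pp b k / (pp c k * (k.factorial : ℝ))

lemma pp_zero (x : ℝ) : pp x 0 = 1 := by simp [pp]
lemma pp_succ (x : ℝ) (n : ℕ) : pp x (n+1) = pp x n * (x + n) := by
  simp [pp, Finset.prod_range_succ]
lemma pp_pos {x : ℝ} (hx : 0 < x) (n : ℕ) : 0 < pp x n :=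
  Finset.prod_pos fun j _ => by positivity

lemma uu_zero (x : ℝ) : uu x 0 = 1 := by simp [uu, pp]
lemma uu_pos {x : ℝ} (hx : 0 < x) (n : ℕ) : 0 < uu x n :=
  div_pos (pp_pos hx n) (by positivity)
lemma uu_succ (x : ℝ) (n : ℕ) : ((n:ℝ)+1) * uu x (n+1) = (x + n) * uu x n := by
  have h : (n.factorial : ℝ) ≠ 0 := by positivity
  have h2 : (n : ℝ) + 1 ≠ 0 := by positivity
  simp only [uu, pp_succ, Nat.factorial_succ]
  push_cast
  field_simp

lemma tt_pos {a b c : ℝ} (ha : 0 < a) (hb : 0 < b) (hc : 0 < c) (k : ℕ) : 0 < tt a b c k :=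
  div_pos (mul_pos (pp_pos ha k) (pp_pos hb k)) (mul_pos (pp_pos hc k) (by positivity))
lemma tt_zero (a b c : ℝ) : tt a b c 0 = 1 := by simp [tt, pp]
lemma tt_succ (a b : ℝ) {c : ℝ} (hc : 0 < c) (n : ℕ) :
    ((n:ℝ)+1) * (c + n) * tt a b c (n+1) = (a + n) * (b + n) * tt a b c n := by
  have h : (n.factorial : ℝ) ≠ 0 := by positivity
  have h2 : (n : ℝ) + 1 ≠ 0 := by positivity
  have h3 : c + (n : ℝ) ≠ 0 := by positivity
  have h4 := (pp_pos hc n).ne'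
  simp only [tt, pp_succ, Nat.factorial_succ]
  push_cast
  field_simp

lemma pp_shift (c : ℝ) (n : ℕ) : c * pp (c+1) n = pp c n * (c + n) := by
  rw [← pp_succ, pp, pp, Finset.prod_range_succ', mul_comm]
  congr 1
  · apply Finset.prod_congr rfl
    intros; push_cast; ring
  · simp

lemma tt_shift (a b : ℝ) {c : ℝ} (hc : 0 < c) (n : ℕ) :
    (c + n) * tt a b (c+1) n = c * tt a b c n := by
  have h1 := (pp_pos hc n).ne'
  have h2 := (pp_pos (by linarith : 0 < c+1) n).ne'
  have h := pp_shift c n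
  have h3 : (n.factorial : ℝ) ≠ 0 := by positivity
  simp only [tt]
  field_simp
  linear_combination (-(pp a n * pp b n)) * h

lemma tt_anti {a b c c' : ℝ} (ha : 0 < a) (hb : 0 < b) (hc : 0 < c) (h : c ≤ c') (k : ℕ) :
    tt a b c' k ≤ tt a b c k := by
  have h1 := pp_pos hc k
  have h2 : pp c k ≤ pp c' k := Finset.prod_le_prod (fun j _ => by positivity)
    (fun j _ => by linarith)
  have := pp_pos ha k
  have := pp_pos hb k
  unfold tt
  gcongr

lemma tt_tele (a b : ℝ) {c : ℝ} (hc : 0 < c) (K : ℕ) :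
    (c - a - b) * ∑ k ∈ Finset.range K, tt a b c k
      = (c - a) * (c - b) / c * (∑ k ∈ Finset.range K, tt a b (c+1) k) - K * tt a b c K := by
  induction K with
  | zero => simp
  | succ n ih =>
    rw [Finset.sum_range_succ, Finset.sum_range_succ, mul_add, mul_add, ih]
    have h1 := tt_succ a b hc n
    have h2 := tt_shift a b hc n
    have h3 : c + (n : ℝ) ≠ 0 := by positivity
    have e1 : tt a b (c+1) n = c * tt a b c n / (c + n) := by
      field_simp; linear_combination h2
    have e2 : ((n:ℝ)+1) * tt a b c (n+1) = (a + n) * (b + n) * tt a b c n / (c + n) := by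
      field_simp; linear_combination h1
    push_cast
    rw [e1, e2]
    field_simp
    ring

lemma uu_tele (s : ℝ) (K : ℕ) :
    s * ∑ k ∈ Finset.range K, uu s k = K * uu s K := by
  induction K with
  | zero => simp
  | succ n ih =>
    rw [Finset.sum_range_succ, mul_add, ih]
    push_cast
    rw [uu_succ]; ring

lemma uu_conv (x y : ℝ) (n : ℕ) :
    ∑ q ∈ Finset.HasAntidiagonal.antidiagonal n, uu x q.1 * uu y q.2 = uu (x+y) n := by
  induction n with
  | zero => simp [uu_zero]
  | succ n ih =>
    have h2 : (n : ℝ) + 1 ≠ 0 := by positivity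
    apply mul_left_cancel₀ h2
    rw [uu_succ, ← ih, Finset.mul_sum, Finset.mul_sum]
    have e : ∀ q ∈ Finset.HasAntidiagonal.antidiagonal (n+1), ((n:ℝ)+1) * (uu x q.1 * uu y q.2)
        = (q.1 : ℝ) * uu x q.1 * uu y q.2 + uu x q.1 * ((q.2:ℝ) * uu y q.2) := by
      intro q hq
      have := Finset.HasAntidiagonal.mem_antidiagonal.1 hq
      have h : ((n:ℝ)+1) = q.1 + q.2 := by exact_mod_cast this.symm
      rw [h]; ring
    rw [Finset.sum_congr rfl e, Finset.sum_add_distrib, Finset.Nat.sum_antidiagonal_succ,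
      Finset.Nat.sum_antidiagonal_succ']
    simp only [Nat.cast_zero, zero_mul, mul_zero, zero_add]
    rw [← Finset.sum_add_distrib]
    apply Finset.sum_congr rfl
    intro q hq
    have := Finset.HasAntidiagonal.mem_antidiagonal.1 hq
    have h : (n:ℝ) = q.1 + q.2 := by exact_mod_cast this.symm
    push_cast
    rw [uu_succ, uu_succ, h]; ring

lemma uu_gamma {x : ℝ} (hx : 0 < x) (n : ℕ) :
    uu x n = Real.Gamma (n + x) / (Real.Gamma x * n.factorial) := by
  have h0 := (Real.Gamma_pos_of_pos hx).ne'
  have h : (n.factorial : ℝ) ≠ 0 := by positivity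
  rw [uu, eq_div_iff (by positivity)]
  have : pp x n * Real.Gamma x = Real.Gamma (n + x) := by
    induction n with
    | zero => simp [pp]
    | succ n ih =>
      rw [pp_succ]
      push_cast
      rw [show (n:ℝ) + 1 + x = (n + x) + 1 by ring, Real.Gamma_add_one (by positivity),
        ← ih (by positivity)]
      ring
  field_simp
  linarith

lemma gamma_le {x θ : ℝ} (hx : 0 < x) (h0 : 0 < θ) (h1 : θ < 1) :
    Real.Gamma (x + θ) ≤ x ^ θ * Real.Gamma x := by
  have h := Real.Gamma_mul_add_mul_le_rpow_Gamma_mul_rpow_Gamma (s := x + 1) (t := x)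
    (a := θ) (b := 1 - θ) (by linarith) hx h0 (by linarith) (by ring)
  have g := Real.Gamma_pos_of_pos hx
  rw [show θ * (x+1) + (1-θ)*x = x + θ by ring, Real.Gamma_add_one hx.ne',
    Real.mul_rpow hx.le g.le, mul_assoc, ← Real.rpow_add g] at h
  simpa using h

lemma gamma_ge {x θ : ℝ} (hx : 0 < x) (h0 : 0 < θ) (h1 : θ < 1) :
    x * Real.Gamma x ≤ (x + θ) ^ (1 - θ) * Real.Gamma (x + θ) := by
  have h := gamma_le (x := x + θ) (θ := 1 - θ) (by linarith) (by linarith) (by linarith)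
  rw [show x + θ + (1 - θ) = x + 1 by ring, Real.Gamma_add_one hx.ne'] at h
  exact h

lemma pp_lim {x y z w : ℝ} (h : x + y = z + w) (hx : Real.Gamma x ≠ 0) (hy : Real.Gamma y ≠ 0) :
    Tendsto (fun n => pp x n * pp y n / (pp z n * pp w n)) atTop
      (𝓝 (Real.Gamma z * Real.Gamma w / (Real.Gamma x * Real.Gamma y))) := by
  rw [← tendsto_add_atTop_iff_nat 1]
  have := ((Real.GammaSeq_tendsto_Gamma z).mul (Real.GammaSeq_tendsto_Gamma w)).div
    ((Real.GammaSeq_tendsto_Gamma x).mul (Real.GammaSeq_tendsto_Gamma y)) (mul_ne_zero hx hy)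
  refine this.congr' ?_
  filter_upwards [eventually_ge_atTop 1] with n hn
  have hn' : (0:ℝ) < n := by exact_mod_cast hn
  have e : (n:ℝ) ^ x * (n:ℝ) ^ y = (n:ℝ)^z * (n:ℝ)^w := by
    rw [← Real.rpow_add hn', ← Real.rpow_add hn', h]
  have hz := Real.rpow_pos_of_pos hn' z
  have hw := Real.rpow_pos_of_pos hn' w
  have hf : (0:ℝ) < n.factorial := by positivity
  simp only [Real.GammaSeq, Pi.div_apply, ← pp.eq_1]
  rw [div_mul_div_comm, div_mul_div_comm, div_div_div_eq,
    show (n:ℝ) ^ x * n.factorial * ((n:ℝ) ^ y * n.factorial)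
      = (n:ℝ) ^ z * n.factorial * ((n:ℝ) ^ w * n.factorial) by linear_combination (n.factorial:ℝ)^2 * e]
  rw [mul_comm (pp z (n+1) * pp w (n+1))]
  exact mul_div_mul_left _ _ (by positivity)

lemma uu_le {s : ℝ} (h0 : 0 < s) (h1 : s < 1) {k : ℕ} (hk : 1 ≤ k) :
    uu s k ≤ (k:ℝ) ^ (s - 1) / Real.Gamma s := by
  have hk' : (0:ℝ) < k := by exact_mod_cast hk
  have g := Real.Gamma_pos_of_pos h0
  have h := gamma_le hk' h0 h1
  have e : (k.factorial : ℝ) = k * Real.Gamma k := by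
    rw [← Real.Gamma_add_one hk'.ne', Real.Gamma_nat_eq_factorial]
  have gk := Real.Gamma_pos_of_pos hk'
  rw [uu_gamma h0, e, Real.rpow_sub_one hk'.ne', div_div, div_le_div_iff₀ (by positivity) (by positivity)]
  calc Real.Gamma (k + s) * (k * Real.Gamma s) ≤ ((k:ℝ)^s * Real.Gamma k) * (k * Real.Gamma s) := by
        gcongr
    _ = _ := by ring

lemma uu_lim {s : ℝ} (h0 : 0 < s) (h1 : s < 1) : Tendsto (uu s) atTop (𝓝 0) := by
  have : Tendsto (fun k : ℕ => (k:ℝ) ^ (s - 1) / Real.Gamma s) atTop (𝓝 0) := by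
    have := (tendsto_rpow_neg_atTop (y := 1 - s) (by linarith)).comp (tendsto_natCast_atTop_atTop (R := ℝ))
    have := this.div_const (Real.Gamma s)
    simpa [Function.comp_def] using this
  refine squeeze_zero' (Eventually.of_forall fun k => (uu_pos h0 k).le) ?_ this
  filter_upwards [eventually_ge_atTop 1] with k hk using uu_le h0 h1 hk

structure Hyp (a b s : ℝ) : Prop where
  ha : 0 < a
  hb : 0 < b
  ha2 : a < 2
  hb2 : b < 2
  h0 : 0 < s
  h1 : s < 1
  hab : a + b = 2 + s

noncomputable def LL (a b s : ℝ) : ℝ := Real.Gamma 2 * Real.Gamma s / (Real.Gamma a * Real.Gamma b)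

noncomputable def rho (a b s : ℝ) (k : ℕ) : ℝ := pp a k * pp b k / (pp 2 k * pp s k)

noncomputable def rr (a b s : ℝ) (k : ℕ) : ℝ := tt a b 2 k - LL a b s * uu s k

namespace Hyp
variable {a b s : ℝ}

lemma L_pos (H : Hyp a b s) : 0 < LL a b s := by
  have := Real.Gamma_pos_of_pos H.ha
  have := Real.Gamma_pos_of_pos H.hb
  have := Real.Gamma_pos_of_pos H.h0
  have := Real.Gamma_pos_of_pos (show (0:ℝ) < 2 by norm_num)
  unfold LL
  positivity

lemma tt_eq (H : Hyp a b s) (k : ℕ) : tt a b 2 k = rho a b s k * uu s k := by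
  have := (pp_pos H.h0 k).ne'
  have := (pp_pos (show (0:ℝ) < 2 by norm_num) k).ne'
  have h3 : (k.factorial : ℝ) ≠ 0 := by positivity
  unfold tt rho uu
  field_simp

lemma rho_pos (H : Hyp a b s) (k : ℕ) : 0 < rho a b s k :=
  div_pos (mul_pos (pp_pos H.ha k) (pp_pos H.hb k))
    (mul_pos (pp_pos (by norm_num) k) (pp_pos H.h0 k))

lemma rho_succ (H : Hyp a b s) (k : ℕ) : rho a b s (k+1) = rho a b s k +
    rho a b s k * ((2-a)*(2-b)) / ((2+k)*(s+k)) := by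
  have := (pp_pos H.h0 k).ne'
  have := (pp_pos (show (0:ℝ) < 2 by norm_num) k).ne'
  have h0 := H.h0
  have : s + (k:ℝ) ≠ 0 := by positivity
  have e := H.hab
  have : b = 2 + s - a := by linarith
  simp only [rho, pp_succ]
  field_simp
  subst this
  ring

lemma rho_lim (H : Hyp a b s) : Tendsto (rho a b s) atTop (𝓝 (LL a b s)) :=
  pp_lim H.hab (Real.Gamma_pos_of_pos H.ha).ne' (Real.Gamma_pos_of_pos H.hb).ne'

lemma rho_le (H : Hyp a b s) (k : ℕ) : rho a b s k ≤ LL a b s := by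
  refine Monotone.ge_of_tendsto (monotone_nat_of_le_succ fun k => ?_) H.rho_lim k
  rw [H.rho_succ]
  have := H.rho_pos k
  have := H.h0
  have h1 : 0 < 2 - a := by linarith [H.ha2]
  have h2 : 0 < 2 - b := by linarith [H.hb2]
  have : 0 ≤ rho a b s k * ((2-a)*(2-b)) / ((2+k)*(s+k)) := by positivity
  linarith

lemma rho_ge (H : Hyp a b s) (k : ℕ) :
    LL a b s ≤ rho a b s k + LL a b s * ((2-a)*(2-b)) / (k + s) := by
  have h0 := H.h0
  have h1 : 0 < 2 - a := by linarith [H.ha2]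
  have h2 : 0 < 2 - b := by linarith [H.hb2]
  have hL := H.L_pos
  have lim : Tendsto (fun k : ℕ => rho a b s k + LL a b s * ((2-a)*(2-b)) / (k + s)) atTop
      (𝓝 (LL a b s + 0)) := by
    refine H.rho_lim.add (Tendsto.const_div_atTop ?_ _)
    exact tendsto_atTop_add_const_right _ _ tendsto_natCast_atTop_atTop
  rw [add_zero] at lim
  refine Antitone.le_of_tendsto (antitone_nat_of_succ_le fun k => ?_) lim k
  rw [H.rho_succ]
  have hr := H.rho_le k
  set M := LL a b s * ((2-a)*(2-b)) with hM
  have hMp : 0 < M := by positivity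
  have e1 : rho a b s k * ((2-a)*(2-b)) / ((2+k)*(s+k)) ≤ M / ((2+k)*(s+k)) := by
    rw [hM]; gcongr
  have e2 : M / ((2+k)*(s+k)) ≤ M / ((k + 1 + s)*(s+k)) := by
    have := H.h1
    have hle : (k:ℝ) + 1 + s ≤ 2 + k := by linarith
    gcongr
  have e3 : M / ((k + 1 + s)*(s+k)) = M / (k + s) - M / (k + 1 + s) := by
    field_simp
    ring
  push_cast
  linarith

lemma r_nonpos (H : Hyp a b s) (k : ℕ) : rr a b s k ≤ 0 := by
  rw [rr, H.tt_eq, ← sub_mul]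
  exact mul_nonpos_of_nonpos_of_nonneg (by linarith [H.rho_le k]) (uu_pos H.h0 k).le

lemma r_lim (H : Hyp a b s) : Tendsto (fun k : ℕ => (k:ℝ) * rr a b s k) atTop (𝓝 0) := by
  have h0 := H.h0
  have h1 : 0 < 2 - a := by linarith [H.ha2]
  have h2 : 0 < 2 - b := by linarith [H.hb2]
  have hL := H.L_pos
  have lim := (uu_lim H.h0 H.h1).const_mul (-(LL a b s * ((2-a)*(2-b))))
  rw [mul_zero] at lim
  refine tendsto_of_tendsto_of_tendsto_of_le_of_le lim tendsto_const_nhds (fun k => ?_) (fun k => ?_)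
  · have hr := H.rho_ge k
    have hu := uu_pos H.h0 k
    set M := LL a b s * ((2-a)*(2-b)) with hM
    have hMp : 0 < M := by positivity
    have : -(M/(k+s)) * uu s k ≤ rr a b s k := by
      rw [rr, H.tt_eq, ← sub_mul]
      gcongr
      linarith
    have hk : (k:ℝ) * (M/(k+s)) ≤ M := by
      rw [mul_div_assoc', div_le_iff₀ (by positivity)]
      nlinarith
    calc -M * uu s k ≤ -((k:ℝ) * (M/(k+s))) * uu s k := by gcongr
      _ = (k:ℝ) * (-(M/(k+s)) * uu s k) := by ring
      _ ≤ _ := by gcongr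
  · exact mul_nonpos_of_nonneg_of_nonpos (by positivity) (H.r_nonpos k)

lemma tt_le (H : Hyp a b s) (k : ℕ) : tt a b 2 k ≤ LL a b s * uu s k := by
  have := H.r_nonpos k
  unfold rr at this
  linarith

lemma tt3_le (H : Hyp a b s) (k : ℕ) : (2 + k) * tt a b 3 k ≤ 2 * (LL a b s * uu s k) := by
  have := tt_shift a b (show (0:ℝ) < 2 by norm_num) k
  norm_num at this
  rw [this]
  linarith [H.tt_le k]

lemma tt3_summable (H : Hyp a b s) : Summable (tt a b 3) := by
  have hs : Summable (fun k : ℕ => 2 * LL a b s / Real.Gamma s * (k:ℝ)^(s-2)) :=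
    (Real.summable_nat_rpow.2 (by linarith [H.h1])).mul_left _
  rw [← summable_nat_add_iff 1] at hs ⊢
  refine hs.of_nonneg_of_le (fun k => (tt_pos H.ha H.hb (by norm_num) _).le) fun k => ?_
  have h := H.tt3_le (k+1)
  have hu := uu_le H.h0 H.h1 (show 1 ≤ k+1 by omega)
  have hL := H.L_pos
  have hk : (0:ℝ) < ((k+1:ℕ):ℝ) := by positivity
  have g := Real.Gamma_pos_of_pos H.h0
  have tp := tt_pos H.ha H.hb (show (0:ℝ) < 3 by norm_num) (k+1)
  have e : ((k+1:ℕ):ℝ)^(s-2) = ((k+1:ℕ):ℝ)^(s-1) / ((k+1:ℕ):ℝ) := by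
    rw [← Real.rpow_sub_one hk.ne']; congr 1; ring
  rw [e, mul_div_assoc', le_div_iff₀ hk]
  calc tt a b 3 (k+1) * ((k+1:ℕ):ℝ) ≤ (2 + ((k+1:ℕ):ℝ)) * tt a b 3 (k+1) := by nlinarith
    _ ≤ 2 * (LL a b s * uu s (k+1)) := h
    _ ≤ 2 * (LL a b s * (((k+1:ℕ):ℝ) ^ (s - 1) / Real.Gamma s)) := by gcongr
    _ = _ := by ring

lemma tt_summable (H : Hyp a b s) {c : ℝ} (hc : 3 ≤ c) : Summable (tt a b c) :=
  H.tt3_summable.of_nonneg_of_le (fun k => (tt_pos H.ha H.hb (by linarith) _).le)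
    (fun k => tt_anti H.ha H.hb (by norm_num) hc k)

lemma ktt_lim (H : Hyp a b s) {c : ℝ} (hc : 3 ≤ c) :
    Tendsto (fun k : ℕ => (k:ℝ) * tt a b c k) atTop (𝓝 0) := by
  have lim := (uu_lim H.h0 H.h1).const_mul (2 * LL a b s)
  rw [mul_zero] at lim
  refine squeeze_zero (fun k => ?_) (fun k => ?_) lim
  · have := tt_pos H.ha H.hb (show 0 < c by linarith) k
    positivity
  · have h1 := tt_anti H.ha H.hb (by norm_num) hc k
    have h2 := H.tt3_le k
    have := tt_pos H.ha H.hb (show (0:ℝ) < 3 by norm_num) k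
    calc (k:ℝ) * tt a b c k ≤ k * tt a b 3 k := by gcongr
      _ ≤ _ := by linarith

lemma gauss_step (H : Hyp a b s) {c : ℝ} (hc : 3 ≤ c) :
    (c - a - b) * ∑' k, tt a b c k = (c-a)*(c-b)/c * ∑' k, tt a b (c+1) k := by
  have h1 := ((H.tt_summable hc).hasSum.tendsto_sum_nat).const_mul (c - a - b)
  have h2 := ((H.tt_summable (c := c+1) (by linarith)).hasSum.tendsto_sum_nat).const_mul
    ((c-a)*(c-b)/c)
  have h3 := h2.sub (H.ktt_lim hc)
  rw [sub_zero] at h3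
  refine tendsto_nhds_unique h1 (h3.congr fun K => ?_)
  rw [tt_tele a b (by linarith)]

lemma r_hasSum (H : Hyp a b s) :
    HasSum (rr a b s) (-((2-a)*(2-b)/2 * (∑' k, tt a b 3 k)) / s) := by
  have h0 := H.h0
  have h2 := ((H.tt_summable (c := 3) le_rfl).hasSum.tendsto_sum_nat).const_mul
    ((2-a)*(2-b)/2)
  have h3 := ((h2.sub H.r_lim).div_const s)
  rw [sub_zero] at h3
  have : HasSum (fun k => - rr a b s k) ((2-a)*(2-b)/2 * (∑' k, tt a b 3 k) / s) := by
    rw [hasSum_iff_tendsto_nat_of_nonneg (fun k => by linarith [H.r_nonpos k])]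
    refine h3.congr fun K => ?_
    have e1 := tt_tele a b (show (0:ℝ) < 2 by norm_num) K
    have e2 := uu_tele s K
    have e3 : (2:ℝ) - a - b = -s := by linarith [H.hab]
    rw [e3] at e1
    norm_num at e1
    rw [div_eq_iff h0.ne']
    simp only [rr, Finset.sum_neg_distrib, Finset.sum_sub_distrib, ← Finset.mul_sum]
    linear_combination (-1:ℝ) * e1 - LL a b s * e2
  have := this.neg
  simpa [neg_div] using this

lemma gauss_one (H : Hyp a b s) :
    Tendsto (fun n : ℕ => ∑' k, tt a b (2 + n) k) atTop (𝓝 1) := by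
  have key : Tendsto (fun n : ℕ => ∑' k, tt a b (2 + n) k) atTop
      (𝓝 (∑' k : ℕ, if k = 0 then (1:ℝ) else 0)) := by
    refine tendsto_tsum_of_dominated_convergence H.tt3_summable (fun k => ?_) ?_
    · rcases k with _ | k
      · simp [tt_zero]
      · simp only [Nat.add_eq_zero_iff, one_ne_zero, and_false, if_false]
        have hb : Tendsto (fun n : ℕ => pp a (k+1) * pp b (k+1) / (2 + (n:ℝ))) atTop (𝓝 0) :=
          Tendsto.const_div_atTop
            (tendsto_atTop_add_const_left _ _ tendsto_natCast_atTop_atTop) _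
        refine squeeze_zero (fun n => (tt_pos H.ha H.hb (by positivity) _).le) (fun n => ?_) hb
        have := pp_pos H.ha (k+1)
        have := pp_pos H.hb (k+1)
        unfold tt
        gcongr
        have h1 : (1:ℝ) ≤ ((k+1).factorial : ℝ) := by
          exact_mod_cast Nat.one_le_iff_ne_zero.2 (Nat.factorial_ne_zero _)
        have h2 : (2 + (n:ℝ)) ≤ pp (2+n) (k+1) := by
          rw [pp, Finset.prod_range_succ']
          have : (1:ℝ) ≤ ∏ j ∈ Finset.range k, (2 + (n:ℝ) + ((j+1:ℕ):ℝ)) := by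
            refine Finset.prod_induction _ (fun x : ℝ => 1 ≤ x) (fun x y hx hy => one_le_mul_of_one_le_of_one_le hx hy) le_rfl ?_
            intro j _
            push_cast
            have : (0:ℝ) ≤ n := by positivity
            have : (0:ℝ) ≤ j := by positivity
            linarith
          have : (0:ℝ) ≤ n := by positivity
          push_cast at *
          nlinarith
        have : (0:ℝ) ≤ n := by positivity
        nlinarith
    · filter_upwards [eventually_ge_atTop 1] with n hn k
      have hn : (1:ℝ) ≤ n := by exact_mod_cast hn
      rw [Real.norm_of_nonneg (tt_pos H.ha H.hb (by positivity) _).le]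
      exact tt_anti H.ha H.hb (by norm_num) (by linarith) k
  simpa using key

lemma r_tsum (H : Hyp a b s) : HasSum (rr a b s)
    (Real.Gamma 2 * Real.Gamma (-s) / (Real.Gamma (2-a) * Real.Gamma (2-b))) := by
  have h0 := H.h0
  have hs1 := H.h1
  have h1 : 0 < 2 - a := by linarith [H.ha2]
  have h2 : 0 < 2 - b := by linarith [H.hb2]
  have hne : ∀ n : ℕ, pp (-s) n ≠ 0 := by
    intro n
    refine Finset.prod_ne_zero_iff.2 fun j _ => ?_
    rcases j with _ | j
    · simp; exact h0.ne'
    · push_cast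
      have : (0:ℝ) ≤ j := by positivity
      exact (by linarith : (0:ℝ) < -s + (j+1)).ne'
  have key : ∀ n : ℕ, pp (2-a) (n+1) * pp (2-b) (n+1) / (pp 2 (n+1) * pp (-s) (n+1)) *
      ∑' k, tt a b (2 + (n+1:ℕ)) k = -((2-a)*(2-b)/2 * (∑' k, tt a b 3 k)) / s := by
    intro n
    induction n with
    | zero =>
      simp only [pp_succ, pp_zero]
      norm_num
      field_simp
    | succ n ih =>
      rw [← ih]
      have st := H.gauss_step (c := 2 + (n+1:ℕ)) (by push_cast; linarith [(by positivity : (0:ℝ) ≤ n)])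
      have e1 : (2 + ((n+1:ℕ):ℝ)) + 1 = 2 + ((n+1+1:ℕ):ℝ) := by push_cast; ring
      have e2 : (2 + ((n+1:ℕ):ℝ)) - a - b = -s + ((n+1:ℕ):ℝ) := by linarith [H.hab]
      rw [e1, e2] at st
      have hne1 := hne (n+1)
      have hne2 := (pp_pos (show (0:ℝ) < 2 by norm_num) (n+1)).ne'
      have hne3 : -s + ((n+1:ℕ):ℝ) ≠ 0 := by
        push_cast
        have : (0:ℝ) ≤ n := by positivity
        exact (by linarith : (0:ℝ) < -s + (n+1)).ne'
      have hne4 : 2 + ((n+1:ℕ):ℝ) ≠ 0 := by positivity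
      rw [pp_succ (2-a) (n+1), pp_succ (2-b) (n+1), pp_succ 2 (n+1), pp_succ (-s) (n+1)]
      set F1 := ∑' k, tt a b (2 + (n+1:ℕ)) k
      set F2 := ∑' k, tt a b (2 + (n+1+1:ℕ)) k
      have : F1 = ((2 + ((n+1:ℕ):ℝ) - a) * (2 + ((n+1:ℕ):ℝ) - b) / (2 + ((n+1:ℕ):ℝ)) * F2) / (-s + ((n+1:ℕ):ℝ)) := by
        rw [eq_div_iff hne3]; linarith
      rw [this]
      generalize ((n+1:ℕ):ℝ) = m at *
      field_simp
      ring
  have g1 := Real.Gamma_pos_of_pos h1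
  have g2 := Real.Gamma_pos_of_pos h2
  have lim := (pp_lim (x := 2-a) (y := 2-b) (z := 2) (w := -s) (by linarith [H.hab])
    g1.ne' g2.ne').mul H.gauss_one
  rw [← tendsto_add_atTop_iff_nat 1, mul_one] at lim
  have := tendsto_nhds_unique lim (tendsto_const_nhds.congr fun n => (key n).symm)
  rw [this]
  exact H.r_hasSum
end Hyp

lemma hypP {p : ℝ} (hp0 : 1 / 2 < p) (hp1 : p < 1) : Hyp ((1+p)/2) (1+p/2) (p-1/2) where
  ha := by linarith
  hb := by linarith
  ha2 := by linarith
  hb2 := by linarith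
  h0 := by linarith
  h1 := by linarith
  hab := by ring

lemma gamma_dup {p : ℝ} (hp0 : 0 < p) (k : ℕ) : Real.Gamma (2 * (k:ℝ) + 1 + p)
    = 4 ^ k * Real.Gamma (1 + p) * (pp ((1+p)/2) k * pp (1+p/2) k) := by
  induction k with
  | zero => simp [pp]
  | succ k ih =>
    push_cast
    rw [show 2 * ((k:ℝ)+1) + 1 + p = (2 * (k:ℝ) + 1 + p + 1) + 1 by ring,
      Real.Gamma_add_one (by positivity), Real.Gamma_add_one (by positivity), ih, pp_succ, pp_succ]
    ring

lemma pp_two (k : ℕ) : pp 2 k = ((k+1).factorial : ℝ) := by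
  induction k with
  | zero => simp [pp]
  | succ k ih =>
    rw [pp_succ, ih, Nat.factorial_succ (k+1)]
    push_cast; ring

lemma cat_eq (k : ℕ) : (catalan k : ℝ) / ((2*k).factorial : ℝ) = 1 / (pp 2 k * k.factorial) := by
  have h1 := succ_mul_catalan_eq_centralBinom k
  have h2 := Nat.choose_mul_factorial_mul_factorial (show k ≤ 2*k by omega)
  rw [← Nat.centralBinom_eq_two_mul_choose, ← h1, show 2*k-k = k by omega] at h2
  rw [pp_two, div_eq_div_iff (by positivity) (by positivity), ← h2, Nat.factorial_succ]
  push_cast; ring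

lemma term_eq {p : ℝ} (hp0 : 0 < p) (k : ℕ) :
    (catalan k : ℝ) * Real.Gamma (2 * (k:ℝ) + 1 + p) / ((2*k).factorial : ℝ)
      = 4 ^ k * Real.Gamma (1+p) * tt ((1+p)/2) (1+p/2) 2 k := by
  rw [mul_div_right_comm, cat_eq, gamma_dup hp0, tt]
  ring

lemma binom_eq (j : ℕ) : (Nat.choose (2*j) j : ℝ) = 4 ^ j * uu (1/2) j := by
  rw [← Nat.centralBinom_eq_two_mul_choose]
  induction j with
  | zero => simp [uu_zero]
  | succ j ih =>
    have h := Nat.succ_mul_centralBinom_succ j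
    have h' : ((j:ℝ)+1) * ((j+1).centralBinom : ℝ) = 2 * (2 * j + 1) * (j.centralBinom : ℝ) := by
      exact_mod_cast h
    have h2 : (j : ℝ) + 1 ≠ 0 := by positivity
    apply mul_left_cancel₀ h2
    rw [h', ih]
    have := uu_succ (1/2) j
    rw [pow_succ]
    linear_combination (-4 * 4 ^ j : ℝ) * this

noncomputable def vv (j : ℕ) : ℝ := j * uu (1/2) j
noncomputable def XX (N : ℕ) : ℝ := Real.Gamma (N + 1) / Real.Gamma (N + 1/2)

lemma uu_half (N : ℕ) : (uu (1/2) N)⁻¹ = √Real.pi * XX N := by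
  rw [uu_gamma (by norm_num), XX, Real.Gamma_one_half_eq, Real.Gamma_nat_eq_factorial, inv_div]
  ring

lemma vv_succ (i : ℕ) : vv (i+1) = 1/2 * uu (3/2) i := by
  have h := uu_succ (1/2) i
  have h2 := pp_shift (1/2) i
  norm_num at h2
  rw [vv]
  push_cast
  rw [h, uu, uu]
  have h3 : (i.factorial : ℝ) ≠ 0 := by positivity
  field_simp
  linear_combination (-2:ℝ) * h2

lemma XX_ge {N : ℕ} (hN : 1 ≤ N) : √(N:ℝ) ≤ XX N := by
  have hN' : (0:ℝ) < N := by exact_mod_cast hN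
  have h := gamma_le hN' (θ := 1/2) (by norm_num) (by norm_num)
  have g := Real.Gamma_pos_of_pos (show (0:ℝ) < N + 1/2 by positivity)
  rw [← Real.sqrt_eq_rpow] at h
  rw [XX, Real.Gamma_add_one hN'.ne', le_div_iff₀ g]
  calc √(N:ℝ) * Real.Gamma (N + 1/2) ≤ √(N:ℝ) * (√(N:ℝ) * Real.Gamma N) := by gcongr
    _ = _ := by rw [← mul_assoc, Real.mul_self_sqrt hN'.le]

lemma XX_le {N : ℕ} (hN : 1 ≤ N) : XX N ≤ √(N:ℝ) * (1 + 1 / (2 * N)) := by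
  have hN' : (0:ℝ) < N := by exact_mod_cast hN
  have h := gamma_ge hN' (θ := 1/2) (by norm_num) (by norm_num)
  have g := Real.Gamma_pos_of_pos (show (0:ℝ) < N + 1/2 by positivity)
  rw [show (1:ℝ) - 1/2 = 1/2 by norm_num, ← Real.sqrt_eq_rpow] at h
  rw [XX, Real.Gamma_add_one hN'.ne', div_le_iff₀ g]
  refine h.trans ?_
  gcongr
  rw [show (N:ℝ) + 1/2 = N * (1 + 1/(2*N)) by field_simp, Real.sqrt_mul hN'.le]
  gcongr
  rw [Real.sqrt_le_left (by positivity)]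
  have : (0:ℝ) ≤ 1 / (2 * N) := by positivity
  nlinarith

lemma XX_lim : Tendsto (fun N : ℕ => XX N / √(N:ℝ)) atTop (𝓝 1) := by
  have l2 : Tendsto (fun N : ℕ => 1 + 1 / (2 * (N:ℝ))) atTop (𝓝 (1 + 0)) := by
    refine tendsto_const_nhds.add (Tendsto.const_div_atTop ?_ _)
    exact Tendsto.const_mul_atTop (by norm_num) tendsto_natCast_atTop_atTop
  rw [add_zero] at l2
  refine tendsto_of_tendsto_of_tendsto_of_le_of_le' tendsto_const_nhds l2 ?_ ?_
  · filter_upwards [eventually_ge_atTop 1] with N hN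
    have hN' : (0:ℝ) < N := by exact_mod_cast hN
    rw [le_div_iff₀ (by positivity), one_mul]
    exact XX_ge hN
  · filter_upwards [eventually_ge_atTop 1] with N hN
    have hN' : (0:ℝ) < N := by exact_mod_cast hN
    rw [div_le_iff₀ (by positivity), mul_comm]
    exact XX_le hN

lemma XX_pos (N : ℕ) : 0 < XX N :=
  div_pos (Real.Gamma_pos_of_pos (by positivity)) (Real.Gamma_pos_of_pos (by positivity))

lemma vv_eq (j : ℕ) : vv j = j / (√Real.pi * XX j) := by
  rw [← uu_half, vv, div_inv_eq_mul]

lemma vv_nonneg (j : ℕ) : 0 ≤ vv j := by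
  have := XX_pos j
  rw [vv_eq]; positivity

lemma vv_le (j : ℕ) : vv j ≤ √(j:ℝ) / √Real.pi := by
  rcases Nat.eq_zero_or_pos j with rfl | hj
  · simp [vv]
  · have hj' : (0:ℝ) < j := by exact_mod_cast hj
    have h := XX_ge hj
    have hp := Real.pi_pos
    have := XX_pos j
    rw [vv_eq, div_le_div_iff₀ (by positivity) (by positivity)]
    calc (j:ℝ) * √Real.pi = √(j:ℝ) * (√Real.pi * √(j:ℝ)) := by
          nth_rewrite 1 [← Real.mul_self_sqrt hj'.le]; ring
      _ ≤ _ := by gcongr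

lemma vv_lim : Tendsto (fun j : ℕ => vv j / √(j:ℝ)) atTop (𝓝 (1 / √Real.pi)) := by
  have hp := Real.pi_pos
  have := (tendsto_const_nhds (x := 1 / √Real.pi)).div XX_lim one_ne_zero
  rw [div_one] at this
  refine this.congr' ?_
  filter_upwards [eventually_ge_atTop 1] with j hj
  have hj' : (0:ℝ) < j := by exact_mod_cast hj
  have h1 := XX_pos j
  have h2 : 0 < √(j:ℝ) := by positivity
  have h3 : 0 < √Real.pi := by positivity
  rw [vv_eq, Pi.div_apply]
  nth_rewrite 2 [← Real.mul_self_sqrt hj'.le]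
  field_simp

lemma vv_shift_lim (k : ℕ) :
    Tendsto (fun N : ℕ => vv (N - k) / √(N:ℝ)) atTop (𝓝 (1 / √Real.pi)) := by
  rw [← tendsto_add_atTop_iff_nat k]
  simp only [Nat.add_sub_cancel]
  have h : Tendsto (fun j : ℕ => √((j:ℝ) / ((j:ℝ) + k))) atTop (𝓝 1) := by
    have := (tendsto_natCast_div_add_atTop (𝕜 := ℝ) (k:ℝ))
    simpa using this.sqrt
  have := vv_lim.mul h
  rw [mul_one] at this
  refine this.congr' ?_
  filter_upwards [eventually_ge_atTop 1] with j hj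
  have hj' : (0:ℝ) < j := by exact_mod_cast hj
  have h2 : 0 < √(j:ℝ) := by positivity
  push_cast
  rw [Real.sqrt_div hj'.le]
  field_simp

lemma C_lim {r : ℕ → ℝ} {S : ℝ} (hr : HasSum r S) (hs : Summable fun k => |r k|) :
    Tendsto (fun N : ℕ => ∑ k ∈ Finset.range N, r k * (vv (N - k) / √(N:ℝ))) atTop
      (𝓝 (S * (1 / √Real.pi))) := by
  have key := tendsto_tsum_of_dominated_convergence (𝓕 := atTop)
    (f := fun (N k : ℕ) => r k * (vv (N - k) / √(N:ℝ))) (g := fun k => r k * (1 / √Real.pi))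
    (bound := fun k => |r k| * (1 / √Real.pi)) (hs.mul_right _)
    (fun k => (vv_shift_lim k).const_mul _) ?_
  · rw [tsum_mul_right, hr.tsum_eq] at key
    refine key.congr fun N => ?_
    refine tsum_eq_sum fun k hk => ?_
    have : N - k = 0 := by simp at hk; omega
    simp [this, vv]
  · filter_upwards [eventually_ge_atTop 1] with N hN k
    have hN' : (0:ℝ) < N := by exact_mod_cast hN
    rw [Real.norm_eq_abs, abs_mul]
    gcongr
    have h0 := vv_nonneg (N-k)
    rw [abs_of_nonneg (by positivity), div_le_iff₀ (by positivity)]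
    refine (vv_le _).trans ?_
    rw [div_mul_eq_mul_div, one_mul]
    gcongr
    exact_mod_cast Nat.sub_le N k

lemma cost_eq_s19 {p : ℝ} (hp0 : 0 < p) (N : ℕ) : dyckCostES p N =
    √Real.pi * XX N * (Real.Gamma (1+p) * ∑ k ∈ Finset.range N,
      tt ((1+p)/2) (1+p/2) 2 k * (1/4 + vv (N-k) / 2)) := by
  rw [dyckCostES, binom_eq, mul_inv, uu_half, Finset.mul_sum, Finset.mul_sum, Finset.mul_sum]
  apply Finset.sum_congr rfl
  intro k hk
  have hk := Finset.mem_range.1 hk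
  obtain ⟨m, rfl⟩ : ∃ m, N = k + m + 1 := ⟨N - k - 1, by omega⟩
  rw [dyckEdgeCount, binom_eq, show k + m + 1 - k = m + 1 by omega, show m + 1 - 1 = m by omega, vv]
  have h := term_eq hp0 k
  push_cast
  have e : (4:ℝ)^(k+m+1) = 4^k*4^m*4 := by rw [pow_succ, pow_add]
  have e4 : (4:ℝ)^(m+1) = 4^m*4 := by rw [pow_succ]
  have hk4 : (4:ℝ)^k ≠ 0 := by positivity
  have hm4 : (4:ℝ)^m ≠ 0 := by positivity
  rw [e, e4]
  calc _ = ((4:ℝ)^k*4^m*4)⁻¹ * (√Real.pi * XX (k+m+1)) *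
        (((catalan k : ℝ) * Real.Gamma (2 * (k:ℝ) + 1 + p) / ((2*k).factorial : ℝ)) *
        (4^m + ((m:ℝ)+1)/2 * (4^m*4*uu (1/2) (m+1)))) := by ring
    _ = _ := by
      rw [h]; field_simp

lemma conv_eq (s : ℝ) {N : ℕ} (hN : 1 ≤ N) :
    ∑ k ∈ Finset.range N, uu s k * vv (N-k) = 1/2 * uu (s+3/2) (N-1) := by
  obtain ⟨m, rfl⟩ : ∃ m, N = m + 1 := ⟨N-1, by omega⟩
  rw [Nat.add_sub_cancel, ← uu_conv,
    Finset.Nat.sum_antidiagonal_eq_sum_range_succ (fun i j => uu s i * uu (3/2) j), Finset.mul_sum]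
  apply Finset.sum_congr rfl
  intro k hk
  have hk := Finset.mem_range.1 hk
  rw [show m + 1 - k = (m - k) + 1 by omega, vv_succ]
  ring

noncomputable def YY (p : ℝ) (N : ℕ) : ℝ := Real.Gamma (N + p) / Real.Gamma N

lemma YY_eq {p : ℝ} (hp0 : 0 < p) {N : ℕ} (hN : 1 ≤ N) :
    Real.Gamma (1+p) * uu (p - 1/2 + 3/2) (N-1) = YY p N := by
  obtain ⟨m, rfl⟩ : ∃ m, N = m + 1 := ⟨N-1, by omega⟩
  have g := (Real.Gamma_pos_of_pos (show 0 < 1 + p by positivity)).ne'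
  rw [Nat.add_sub_cancel, show p - 1/2+3/2 = 1 + p by ring, uu_gamma (by positivity), YY]
  push_cast
  rw [Real.Gamma_nat_eq_factorial, add_assoc]
  field_simp

lemma XY_bound {p : ℝ} (hp0 : 0 < p) (hp1 : p < 1) {N : ℕ} (hN : 1 ≤ N) :
    |XX N * YY p N - (N:ℝ)^(1/2+p)| ≤ (N:ℝ)^(1/2+p) * (1 / N) := by
  have hN' : (0:ℝ) < N := by exact_mod_cast hN
  have g := Real.Gamma_pos_of_pos hN'
  have y1 : YY p N ≤ (N:ℝ)^p := by
    rw [YY, div_le_iff₀ g]; exact gamma_le hN' hp0 hp1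
  have y0 : 0 < YY p N := div_pos (Real.Gamma_pos_of_pos (by positivity)) g
  have y2 : (N:ℝ)^p * (1 - 1/N) ≤ YY p N := by
    have h := gamma_ge hN' hp0 hp1
    have h' : (N:ℝ) ≤ (N+p)^(1-p) * YY p N := by
      rw [YY, mul_div_assoc', le_div_iff₀ g]; exact h
    have e1 : ((N:ℝ)+p)^(1-p) ≤ (N:ℝ)^(1-p) * (1 + p/N) := by
      rw [show (N:ℝ) + p = N * (1 + p/N) by field_simp, Real.mul_rpow hN'.le (by positivity)]
      gcongr
      have : (1:ℝ) ≤ 1 + p/N := by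
        have : 0 ≤ p/N := by positivity
        linarith
      calc (1+p/N)^(1-p) ≤ (1+p/N)^(1:ℝ) := Real.rpow_le_rpow_of_exponent_le this (by linarith)
        _ = _ := Real.rpow_one _
    have e2 : (N:ℝ)^p * (N:ℝ)^(1-p) = N := by
      rw [← Real.rpow_add hN']; simp
    have hq : 0 < (N:ℝ)^(1-p) := by positivity
    have hpp : 0 < (N:ℝ)^p := by positivity
    have h3 : (N:ℝ)^p * (N:ℝ)^(1-p) ≤ (N:ℝ)^(1-p) * (1+p/N) * YY p N := by
      rw [e2]; refine h'.trans ?_; gcongr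
    have h4 : (N:ℝ)^p ≤ (1+p/N) * YY p N := by
      nlinarith
    have h5 : p / N ≤ 1 / N := by gcongr
    have h6 : p / N * YY p N ≤ 1 / N * (N:ℝ)^p := by gcongr
    nlinarith
  have x1 := XX_le hN
  have x2 := XX_ge hN
  have e : (N:ℝ)^(1/2+p) = √(N:ℝ) * (N:ℝ)^p := by
    rw [Real.rpow_add hN', Real.sqrt_eq_rpow]
  have hs : 0 < √(N:ℝ) := by positivity
  have hpp : 0 < (N:ℝ)^p := by positivity
  rw [e, abs_le]
  constructor
  · have : √(N:ℝ) * ((N:ℝ)^p * (1 - 1/N)) ≤ XX N * YY p N := by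
      calc _ ≤ √(N:ℝ) * YY p N := by gcongr
        _ ≤ _ := by gcongr
    linarith
  · have : XX N * YY p N ≤ √(N:ℝ) * (1 + 1/(2*N)) * (N:ℝ)^p := by gcongr
    have h2 : (1:ℝ)/(2*N) ≤ 1/N := by
      apply one_div_le_one_div_of_le hN'; linarith
    have : √(N:ℝ) * (1 + 1/(2*N)) * (N:ℝ)^p ≤ √(N:ℝ) * (1 + 1/N) * (N:ℝ)^p := by gcongr
    linarith

lemma pow_lim {y : ℝ} (hy : y < 0) : Tendsto (fun N : ℕ => (N:ℝ)^y) atTop (𝓝 0) := by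
  have := (tendsto_rpow_neg_atTop (y := -y) (by linarith)).comp
    (tendsto_natCast_atTop_atTop (R := ℝ))
  simpa [Function.comp_def] using this

lemma B_lim {p : ℝ} (hp0 : 0 < p) (hp1 : p < 1) :
    Tendsto (fun N : ℕ => (XX N * YY p N - (N:ℝ)^(1/2+p)) / N) atTop (𝓝 0) := by
  have l := pow_lim (show p - 3/2 < 0 by linarith)
  refine squeeze_zero_norm' ?_ l
  filter_upwards [eventually_ge_atTop 1] with N hN
  have hN' : (0:ℝ) < N := by exact_mod_cast hN
  rw [norm_div, Real.norm_eq_abs, Real.norm_of_nonneg hN'.le, div_le_iff₀ hN']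
  refine (XY_bound hp0 hp1 hN).trans (le_of_eq ?_)
  rw [mul_one_div, ← Real.rpow_sub_one hN'.ne', ← Real.rpow_add_one hN'.ne']
  congr 1; ring

lemma A_lim {p : ℝ} (hp0 : 1/2 < p) (hp1 : p < 1) :
    Tendsto (fun N : ℕ => XX N * (∑ k ∈ Finset.range N, tt ((1+p)/2) (1+p/2) 2 k) / N)
      atTop (𝓝 0) := by
  have H := hypP hp0 hp1
  set a := (1+p)/2
  set b := 1+p/2
  set s := p-1/2 with hs
  have hL := H.L_pos
  have h0 := H.h0
  have g := Real.Gamma_pos_of_pos h0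
  have l := (XX_lim.mul (pow_lim (show p - 1 < 0 by linarith))).const_mul
    (LL a b s / s / Real.Gamma s)
  rw [mul_zero, mul_zero] at l
  refine squeeze_zero' ?_ ?_ l
  · refine Eventually.of_forall fun N => ?_
    have := XX_pos N
    have : 0 ≤ ∑ k ∈ Finset.range N, tt a b 2 k :=
      Finset.sum_nonneg fun k _ => (tt_pos H.ha H.hb (by norm_num) k).le
    positivity
  · filter_upwards [eventually_ge_atTop 1] with N hN
    have hN' : (0:ℝ) < N := by exact_mod_cast hN
    have hX := XX_pos N
    have h1 : ∑ k ∈ Finset.range N, tt a b 2 k ≤ LL a b s / s * (N * uu s N) := by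
      rw [← uu_tele, ← mul_assoc, div_mul_cancel₀ _ h0.ne', Finset.mul_sum]
      exact Finset.sum_le_sum fun k _ => H.tt_le k
    have h2 := uu_le h0 H.h1 hN
    have hsq : 0 < √(N:ℝ) := by positivity
    have e : (N:ℝ)^(p-1) = √(N:ℝ) * (N:ℝ)^(s-1) := by
      rw [Real.sqrt_eq_rpow, ← Real.rpow_add hN']; congr 1; rw [hs]; ring
    calc XX N * (∑ k ∈ Finset.range N, tt a b 2 k) / N
        ≤ XX N * (LL a b s / s * (N * ((N:ℝ) ^ (s - 1) / Real.Gamma s))) / N := by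
          refine div_le_div_of_nonneg_right (mul_le_mul_of_nonneg_left (h1.trans ?_) hX.le) hN'.le
          gcongr
      _ = _ := by
        rw [e]; field_simp

theorem dyckCostES_subleading_high_p (p : ℝ) (hp0 : 1 / 2 < p) (hp1 : p < 1) :
    Filter.Tendsto
      (fun N : ℕ =>
        (dyckCostES p N -
          (2 : ℝ) ^ p * Real.Gamma (p - 1 / 2) / (4 * Real.Gamma (p + 1)) *
            (N : ℝ) ^ (1 / 2 + p)) / (N : ℝ))
      Filter.atTop
      (nhds (Real.Gamma (1 / 2 - p) * Real.Gamma (p + 1) /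
        ((2 : ℝ) ^ p * Real.sqrt Real.pi * Real.Gamma (2 - p)))) := by
  have H := hypP hp0 hp1
  have hp : 0 < p := by linarith
  have hS := H.r_tsum
  have hSabs : Summable fun k => |rr ((1+p)/2) (1+p/2) (p-1/2) k| := hS.summable.abs
  have hC := C_lim hS hSabs
  have hA := A_lim hp0 hp1
  have hB := B_lim hp hp1
  have hpi := Real.pi_pos
  have hsp : 0 < √Real.pi := by positivity
  have g1 := Real.Gamma_pos_of_pos (show 0 < p + 1 by linarith)
  have g2 := Real.Gamma_pos_of_pos (show 0 < 2 - p by linarith)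
  have h2p : (0:ℝ) < 2 ^ p := by positivity
  -- duplication values
  have d1 : Real.Gamma ((1+p)/2) * Real.Gamma (1+p/2) = Real.Gamma (p+1) * (2^p)⁻¹ * √Real.pi := by
    have := Real.Gamma_mul_Gamma_add_half ((1+p)/2)
    rw [show (1+p)/2 + 1/2 = 1 + p/2 by ring, show 2 * ((1+p)/2) = p + 1 by ring,
      show 1 - (p+1) = -p by ring, Real.rpow_neg (by norm_num)] at this
    exact this
  have d2 : Real.Gamma (2 - (1+p)/2) * Real.Gamma (2 - (1+p/2))
      = Real.Gamma (2-p) * (2^p / 2) * √Real.pi := by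
    have := Real.Gamma_mul_Gamma_add_half (1-p/2)
    rw [show 1-p/2 + 1/2 = 2 - (1+p)/2 by ring, show 2 * (1-p/2) = 2 - p by ring,
      show 1 - (2-p) = p - 1 by ring, Real.rpow_sub_one (by norm_num)] at this
    rw [show 2 - (1+p/2) = 1 - p/2 by ring, mul_comm, this]
  have G2 : Real.Gamma 2 = 1 := Real.Gamma_two
  have hLL : LL ((1+p)/2) (1+p/2) (p-1/2) * √Real.pi
      = 2^p * Real.Gamma (p-1/2) / Real.Gamma (p+1) := by
    rw [LL, d1, G2]; field_simp
  set L := LL ((1+p)/2) (1+p/2) (p-1/2) with hLdef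
  have lim := ((hA.const_mul (√Real.pi * Real.Gamma (p+1) / 4)).add
    (hB.const_mul (L * √Real.pi / 4))).add
      ((XX_lim.mul hC).const_mul (√Real.pi * Real.Gamma (p+1) / 2))
  have elim : √Real.pi * Real.Gamma (p+1) / 4 * 0 + L * √Real.pi / 4 * 0 +
      √Real.pi * Real.Gamma (p+1) / 2 * (1 * (Real.Gamma 2 * Real.Gamma (-(p - 1/2)) /
        (Real.Gamma (2 - (1+p)/2) * Real.Gamma (2 - (1+p/2))) * (1 / √Real.pi)))
      = Real.Gamma (1 / 2 - p) * Real.Gamma (p + 1) /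
        ((2 : ℝ) ^ p * Real.sqrt Real.pi * Real.Gamma (2 - p)) := by
    rw [d2, G2, show -(p-1/2) = 1/2 - p by ring]
    field_simp
    ring
  rw [elim] at lim
  refine lim.congr' ?_
  filter_upwards [eventually_ge_atTop 1] with N hN
  have hN' : (0:ℝ) < N := by exact_mod_cast hN
  have hsq : 0 < √(N:ℝ) := by positivity
  have hsqq : √(N:ℝ) * √(N:ℝ) = N := Real.mul_self_sqrt hN'.le
  have hcoef : (2 : ℝ) ^ p * Real.Gamma (p - 1 / 2) / (4 * Real.Gamma (p + 1)) = L * √Real.pi / 4 := by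
    rw [hLL]; field_simp
  rw [hcoef, cost_eq_s19 hp]
  have hsum : ∑ k ∈ Finset.range N, tt ((1+p)/2) (1+p/2) 2 k * (1/4 + vv (N-k) / 2)
      = 1/4 * ∑ k ∈ Finset.range N, tt ((1+p)/2) (1+p/2) 2 k
        + L / 2 * (1/2 * uu (p - 1/2 + 3/2) (N-1))
        + √(N:ℝ) / 2 * ∑ k ∈ Finset.range N,
            rr ((1+p)/2) (1+p/2) (p-1/2) k * (vv (N - k) / √(N:ℝ)) := by
    rw [← conv_eq _ hN, Finset.mul_sum, Finset.mul_sum, Finset.mul_sum, ← Finset.sum_add_distrib,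
      ← Finset.sum_add_distrib]
    apply Finset.sum_congr rfl
    intro k _
    rw [rr, ← hLdef]
    field_simp
    ring
  have hY := YY_eq hp hN
  rw [hsum, ← hY, show 1 + p = p + 1 by ring]
  generalize (∑ k ∈ Finset.range N, rr _ _ _ k * (vv (N - k) / √(N:ℝ))) = S1
  generalize (∑ k ∈ Finset.range N, tt _ _ 2 k) = S2
  generalize uu (p - 1/2 + 3/2) (N-1) = U
  generalize (N:ℝ) ^ (1/2+p) = V
  generalize XX N = X
  generalize √(N:ℝ) = q at hsq hsqq ⊢
  rw [← hsqq]
  field_simp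
  ring
end
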